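/- Let d ≥ 1 and p_j, q_j ∈ [1,∞] for j = 0,1,2. Suppose there is a constant C > 0 such that ‖a#b‖_{ℳ^{p₀′,q₀′}} ≤ C ‖a‖_{ℳ^{p₁,q₁}} ‖b‖_{ℳ^{p₂,q₂}} for all Schwartz functions a, b on ℝ^{2d} (norms taking values in [0,∞]). Then 1 ≤ 1/p₀ + 1/p₁ + 1/p₂, and 1 ≤ 1/q_j + 1/q_k for all 0 ≤ j ≠ k ≤ 2. -/

import Mathlib

open MeasureTheory Filter
open scoped ENNReal RealInnerProductSpace BigOperators

noncomputable section

/-- The phase space `ℝ^d × ℝ^d ≃ ℝ^{2d}`. -/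
abbrev PhS (d : ℕ) : Type := EuclideanSpace ℝ (Fin d) × EuclideanSpace ℝ (Fin d)

/-- The symplectic form `σ((x,ξ),(y,η)) = ⟨y,ξ⟩ - ⟨x,η⟩`. -/
def symplForm {d : ℕ} (X Y : PhS d) : ℝ := ⟪Y.1, X.2⟫ - ⟪X.1, Y.2⟫

/-- The symplectic Fourier transform `(F_σ a)(X) = π^{-d} ∫ a(Y) e^{2iσ(X,Y)} dY`. -/
def symplFT (d : ℕ) (a : PhS d → ℂ) (X : PhS d) : ℂ :=
  ((Real.pi : ℂ) ^ d)⁻¹ * ∫ Y : PhS d, a Y * Complex.exp (2 * Complex.I * (symplForm X Y : ℂ))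

/-- The twisted convolution
`(a ∗_σ b)(X) = (2/π)^{d/2} ∫ a(X-Y) b(Y) e^{2iσ(X,Y)} dY`. -/
def twistConv (d : ℕ) (a b : PhS d → ℂ) (X : PhS d) : ℂ :=
  (((2 / Real.pi) ^ ((d : ℝ) / 2) : ℝ) : ℂ) *
    ∫ Y : PhS d, a (X - Y) * b Y * Complex.exp (2 * Complex.I * (symplForm X Y : ℂ))

/-- The Weyl product `a # b = (2π)^{-d/2} a ∗_σ (F_σ b)`. -/
def weylProd (d : ℕ) (a b : PhS d → ℂ) : PhS d → ℂ := fun X =>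
  (((2 * Real.pi) ^ (-(d : ℝ) / 2) : ℝ) : ℂ) * twistConv d a (symplFT d b) X

/-- The `N`-fold Weyl product `a₁ # ⋯ # a_N` of a list of symbols. -/
def weylProdList (d : ℕ) : List (PhS d → ℂ) → (PhS d → ℂ)
  | [] => fun _ => 0
  | [a] => a
  | a :: b :: l => weylProd d a (weylProdList d (b :: l))

/-- The symplectic short-time Fourier transform
`𝒱_Φ a (X,Y) = π^{-d} ∫ a(Z) conj(Φ(Z-X)) e^{2iσ(Y,Z)} dZ`. -/
def symplSTFT (d : ℕ) (Φ a : PhS d → ℂ) (X Y : PhS d) : ℂ :=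
  ((Real.pi : ℂ) ^ d)⁻¹ *
    ∫ Z : PhS d, a Z * (starRingEnd ℂ) (Φ (Z - X)) *
      Complex.exp (2 * Complex.I * (symplForm Y Z : ℂ))

/-- The `L^p` norm (with values in `[0,∞]`) of an `ℝ≥0∞`-valued function,
with the convention of an essential supremum when `p = ∞`. -/
def lpNormENN {α : Type*} [MeasurableSpace α] (μ : Measure α) (p : ℝ≥0∞)
    (f : α → ℝ≥0∞) : ℝ≥0∞ :=
  if p = ∞ then essSup f μ else (∫⁻ x, f x ^ p.toReal ∂μ) ^ (1 / p.toReal)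

/-- The modulation space norm `‖a‖_{ℳ^{p,q}_{(ω)}}` with respect to the window `Φ`. -/
def modNorm (d : ℕ) (p q : ℝ≥0∞) (ω : PhS d × PhS d → ℝ) (Φ a : PhS d → ℂ) : ℝ≥0∞ :=
  lpNormENN volume q fun Y =>
    lpNormENN volume p fun X => ENNReal.ofReal (‖symplSTFT d Φ a X Y‖ * ω (X, Y))

/-- The Wiener amalgam space norm `‖a‖_{𝒲^{p,q}_{(ω)}}` with respect to the window `Φ`. -/
def wienerNorm (d : ℕ) (p q : ℝ≥0∞) (ω : PhS d × PhS d → ℝ) (Φ a : PhS d → ℂ) : ℝ≥0∞ :=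
  lpNormENN volume p fun X =>
    lpNormENN volume q fun Y => ENNReal.ofReal (‖symplSTFT d Φ a X Y‖ * ω (X, Y))

/-- Membership in the class `𝒫_E` of positive, locally bounded, moderate weights. -/
def IsModerateWeight {E : Type*} [NormedAddCommGroup E] (ω : E → ℝ) : Prop :=
  (∀ x, 0 < ω x) ∧ (∀ r : ℝ, ∃ M : ℝ, ∀ x, ‖x‖ ≤ r → ω x ≤ M) ∧
    ∃ C c : ℝ, 0 < C ∧ 0 < c ∧ ∀ x y, ω (x + y) ≤ C * ω x * Real.exp (c * ‖y‖)

/-- The real number `1/p ∈ [0,1]` associated to `p ∈ [1,∞]`. -/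
def rcp (p : ℝ≥0∞) : ℝ := (p⁻¹).toReal

/-- The Hölder–Young exponent function `R_N(p) = (N-1)⁻¹ (Σ_{j=0}^N 1/p_j - 1)`. -/
def RN (N : ℕ) (p : Fin (N + 1) → ℝ≥0∞) : ℝ :=
  ((∑ j, rcp (p j)) - 1) / ((N : ℝ) - 1)

/-- The Weyl weight condition:
`1 ≲ ω₀(X_N+X₀, X_N-X₀) ∏_{j=1}^N ω_j(X_j+X_{j-1}, X_j-X_{j-1})`. -/
def WeylWeightCond (d N : ℕ) (ω : Fin (N + 1) → (PhS d × PhS d → ℝ)) : Prop :=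
  ∃ C : ℝ, 0 < C ∧ ∀ X : Fin (N + 1) → PhS d,
    1 ≤ C * ω 0 (X (Fin.last N) + X 0, X (Fin.last N) - X 0) *
      ∏ j : Fin N, ω j.succ (X j.succ + X j.castSucc, X j.succ - X j.castSucc)

end

/-!
For phase-space points `α`, `β`, let `E_{αβ}` be the Weyl symbol of the rank-one operator built from
the Gaussian coherent states `φ_α`, `φ_β`. These symbols compose like matrix units,
`E_{αβ} # E_{γδ} = 2⁻ᵈ ⟨φ_γ, φ_β⟩ E_{αδ}`, and the short-time Fourier transform of `E_{αβ}` is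
concentrated around `((α + β) / 2, (β - α) / 2)`. A sum of `N` of them therefore has
`ℳ^{p,q}`-norm comparable to `N^{1/p}` if they are `E_{zz}` with `z` widely separated, and to
`N^{1/q}` if the differences `β - α` are widely separated. Testing the bound on
* `(∑ E_{zz}) # (∑ E_{zz})`, close to a multiple of `∑ E_{zz}`, gives `1/p₀' ≤ 1/p₁ + 1/p₂`;
* `(∑ E_{z0}) # E_{00}` and `E_{00} # (∑ E_{0z})` gives `1/q₀' ≤ 1/q₁` and `1/q₀' ≤ 1/q₂`;
* `(∑ E_{0z}) # (∑ E_{z0})`, which for collinear `z` is a multiple of `E_{00}` by at least `2⁻ᵈ N`,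
  since the overlaps are then positive, gives `1 ≤ 1/q₁ + 1/q₂`,
each time on letting `N → ∞`.
-/

noncomputable section

section LebesgueNorm

variable {α : Type*} [MeasurableSpace α] {μ : Measure α} {p : ℝ≥0∞}

lemma lpNormENN_eq_eLpNorm (hp : p ≠ 0) (f : α → ℝ≥0∞) : lpNormENN μ p f = eLpNorm f p μ := by
  by_cases hp_top : p = ∞
  · simp [lpNormENN, hp_top, eLpNormEssSup]
  · simp [lpNormENN, hp_top, eLpNorm_eq_lintegral_rpow_enorm_toReal hp hp_top]

lemma rcp_eq_inv_toReal (p : ℝ≥0∞) : rcp p = p.toReal⁻¹ := ENNReal.toReal_inv p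

lemma rcp_nonneg (p : ℝ≥0∞) : 0 ≤ rcp p := ENNReal.toReal_nonneg

lemma ofReal_natCast_mul_rpow_rcp (n : ℕ) (x : ℝ) (p : ℝ≥0∞) :
    ENNReal.ofReal (n * x) ^ rcp p = (n : ℝ≥0∞) ^ rcp p * ENNReal.ofReal x ^ rcp p := by
  rw [ENNReal.ofReal_mul n.cast_nonneg, ENNReal.ofReal_natCast,
    ENNReal.mul_rpow_of_nonneg _ _ (rcp_nonneg p)]

lemma rcp_add_rcp_eq_one {p p' : ℝ≥0∞} (h : p⁻¹ + p'⁻¹ = 1) : rcp p + rcp p' = 1 := by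
  have h_top : p⁻¹ ≠ ∞ ∧ p'⁻¹ ≠ ∞ := ENNReal.add_ne_top.1 (h ▸ ENNReal.one_ne_top)
  rw [rcp, rcp, ← ENNReal.toReal_add h_top.1 h_top.2, h, ENNReal.toReal_one]

lemma ne_zero_of_inv_add_inv_eq_one {p p' : ℝ≥0∞} (h : p⁻¹ + p'⁻¹ = 1) : p' ≠ 0 := by
  rintro rfl
  simp at h

lemma lpNormENN_le_mul_rpow (hp : 1 ≤ p) {f : α → ℝ≥0∞} {M A : ℝ≥0∞} (hM : M ≠ ∞)
    (hf : ∀ x, f x ≤ M) (hf_int : ∫⁻ x, f x ∂μ ≤ M * A) :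
    lpNormENN μ p f ≤ M * A ^ rcp p := by
  rw [lpNormENN]
  split_ifs with hp_top
  · simpa [hp_top, rcp] using essSup_le_of_ae_le M (ae_of_all μ hf)
  have hr : 1 ≤ p.toReal := by simpa using ENNReal.toReal_mono hp_top hp
  rw [rcp_eq_inv_toReal, one_div]
  set r := p.toReal
  have rpow_split (t : ℝ≥0∞) : t ^ r = t * t ^ (r - 1) := by
    simpa using ENNReal.rpow_add_of_nonneg (x := t) 1 (r - 1) zero_le_one (by linarith)
  have lintegral_rpow_le : ∫⁻ x, f x ^ r ∂μ ≤ M ^ r * A :=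
    calc ∫⁻ x, f x ^ r ∂μ ≤ ∫⁻ x, f x * M ^ (r - 1) ∂μ := by
          refine lintegral_mono fun x => ?_
          rw [rpow_split]
          gcongr
          exact hf x
      _ = (∫⁻ x, f x ∂μ) * M ^ (r - 1) :=
          lintegral_mul_const' _ _ (ENNReal.rpow_ne_top_of_nonneg (by linarith) hM)
      _ ≤ M * A * M ^ (r - 1) := by gcongr
      _ = M ^ r * A := by rw [rpow_split M]; ring
  calc (∫⁻ x, f x ^ r ∂μ) ^ r⁻¹ ≤ (M ^ r * A) ^ r⁻¹ := by gcongr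
    _ = M * A ^ r⁻¹ := by
      rw [ENNReal.mul_rpow_of_nonneg _ _ (by positivity), ENNReal.rpow_rpow_inv (by positivity)]

lemma mul_rpow_measure_le_lpNormENN (hp : p ≠ 0) {f : α → ℝ≥0∞} {m : ℝ≥0∞} {s : Set α}
    (hs : MeasurableSet s) (hμs : μ s ≠ 0) (hf : ∀ x ∈ s, m ≤ f x) :
    m * μ s ^ rcp p ≤ lpNormENN μ p f := by
  have h_indicator : eLpNorm (s.indicator fun _ => m) p μ = m * μ s ^ rcp p := by
    simp [eLpNorm_indicator_const' hs hμs hp, rcp_eq_inv_toReal]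
  rw [lpNormENN_eq_eLpNorm hp, ← h_indicator]
  exact eLpNorm_mono_enorm fun x => by simpa using Set.indicator_le hf x

lemma lpNormENN_const_mul (hp : p ≠ 0) {c : ℝ≥0∞} (hc : c ≠ ∞) (f : α → ℝ≥0∞) :
    lpNormENN μ p (fun x => c * f x) = c * lpNormENN μ p f := by
  rw [lpNormENN, lpNormENN]
  split_ifs with hp_top
  · exact ENNReal.essSup_const_mul
  have hr : 0 < p.toReal := ENNReal.toReal_pos hp hp_top
  simp_rw [ENNReal.mul_rpow_of_nonneg _ _ hr.le]
  rw [lintegral_const_mul' _ _ (ENNReal.rpow_ne_top_of_nonneg hr.le hc),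
    ENNReal.mul_rpow_of_nonneg _ _ (by positivity), one_div, ENNReal.rpow_rpow_inv hr.ne']

lemma le_of_forall_natCast_rpow_le {s t : ℝ} {c₀ c₁ : ℝ≥0∞} (hc₀ : c₀ ≠ 0) (hc₁ : c₁ ≠ ∞)
    (h : ∀ N : ℕ, 0 < N → c₀ * (N : ℝ≥0∞) ^ s ≤ c₁ * (N : ℝ≥0∞) ^ t) : s ≤ t := by
  by_contra! hts
  obtain ⟨N, hN⟩ := ENNReal.exists_nat_gt <|
    ENNReal.rpow_ne_top_of_nonneg (inv_nonneg.2 (sub_pos.2 hts).le) (ENNReal.div_ne_top hc₁ hc₀)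
  have hN₀ : (N : ℝ≥0∞) ≠ 0 := (bot_le.trans_lt hN).ne'
  have hN_top : (N : ℝ≥0∞) ≠ ∞ := ENNReal.natCast_ne_top N
  have h_quotient : (N : ℝ≥0∞) ^ (s - t) ≤ c₁ / c₀ := by
    have hN_le := h N (Nat.pos_of_ne_zero (by exact_mod_cast hN₀))
    rw [← sub_add_cancel s t, ENNReal.rpow_add _ _ hN₀ hN_top, ← mul_assoc,
      ENNReal.mul_le_mul_iff_left (by simp [hN₀]) (ENNReal.rpow_ne_top_of_ne_zero hN₀ hN_top),
      mul_comm] at hN_le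
    exact ENNReal.le_div_iff_mul_le (Or.inl hc₀) (Or.inr hc₁) |>.2 hN_le
  exact hN.not_ge ((ENNReal.le_rpow_inv_iff (sub_pos.2 hts)).2 h_quotient)

end LebesgueNorm

section ExpSchwartz

lemma norm_iteratedFDeriv_cexp_le (n : ℕ) (z : ℂ) :
    ‖iteratedFDeriv ℝ n Complex.exp z‖ ≤ ‖Complex.exp z‖ := by
  induction n with
  | zero => simp
  | succ n ih =>
    have fderiv_cexp : fderiv ℝ Complex.exp = ContinuousLinearMap.mul ℝ ℂ ∘ Complex.exp := by
      funext w
      rw [((Complex.hasDerivAt_exp w).hasFDerivAt.restrictScalars ℝ).fderiv]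
      ext
      simp [mul_comm]
    rw [← norm_iteratedFDeriv_fderiv, fderiv_cexp]
    calc _ ≤ ‖ContinuousLinearMap.mul ℝ ℂ‖ * ‖iteratedFDeriv ℝ n Complex.exp z‖ :=
          ContinuousLinearMap.norm_iteratedFDeriv_comp_left _ Complex.contDiff_exp.contDiffAt le_rfl
      _ ≤ 1 * ‖Complex.exp z‖ := by
          gcongr
          exact ContinuousLinearMap.opNorm_mul_le ℝ ℂ
      _ = ‖Complex.exp z‖ := one_mul _

variable {E : Type*} [NormedAddCommGroup E]

lemma one_add_norm_pow_mul_norm_cexp_le {h : E → ℂ} {b : ℝ} (hre : ∀ x, (h x).re ≤ b - ‖x‖)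
    (k : ℕ) (x : E) : (1 + ‖x‖) ^ k * ‖Complex.exp (h x)‖ ≤ k.factorial * Real.exp (1 + b) :=
  calc (1 + ‖x‖) ^ k * ‖Complex.exp (h x)‖
      ≤ (k.factorial * Real.exp (1 + ‖x‖)) * Real.exp (b - ‖x‖) := by
        rw [Complex.norm_exp]
        gcongr
        · have := Real.pow_div_factorial_le_exp (1 + ‖x‖) (by positivity) k
          rwa [div_le_iff₀' (by positivity)] at this
        · exact hre x
    _ = k.factorial * Real.exp (1 + b) := by
        rw [mul_assoc, ← Real.exp_add]
        ring_nf

variable [NormedSpace ℝ E]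

/-- The Schwartz function `exp ∘ h`, for an exponent `h` of temperate growth whose real part tends
to `-∞` at least linearly. -/
def expSchwartz (h : E → ℂ) (hh : h.HasTemperateGrowth) (hre : ∃ b, ∀ x, (h x).re ≤ b - ‖x‖) :
    SchwartzMap E ℂ where
  toFun x := Complex.exp (h x)
  smooth' := Complex.contDiff_exp.comp hh.1
  decay' m n := by
    obtain ⟨k, C, hC, h_deriv⟩ := hh.norm_iteratedFDeriv_le_uniform n
    obtain ⟨b, hb⟩ := hre
    refine ⟨n.factorial * (1 + C) ^ n * ((m + k * n).factorial * Real.exp (1 + b)), fun x => ?_⟩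
    have h_comp : ‖iteratedFDeriv ℝ n (Complex.exp ∘ h) x‖ ≤
        n.factorial * ‖Complex.exp (h x)‖ * ((1 + C) * (1 + ‖x‖) ^ k) ^ n := by
      refine norm_iteratedFDeriv_comp_le Complex.contDiff_exp
        (hh.1.of_le (by exact_mod_cast le_top)) le_rfl x
        (fun i _ => norm_iteratedFDeriv_cexp_le i (h x)) fun i hi hin => ?_
      have one_le_base : 1 ≤ (1 + C) * (1 + ‖x‖) ^ k :=
        one_le_mul_of_one_le_of_one_le (by linarith) (one_le_pow₀ (by linarith [norm_nonneg x]))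
      calc ‖iteratedFDeriv ℝ i h x‖ ≤ C * (1 + ‖x‖) ^ k := h_deriv i hin x
        _ ≤ (1 + C) * (1 + ‖x‖) ^ k := by gcongr; linarith
        _ ≤ ((1 + C) * (1 + ‖x‖) ^ k) ^ i := le_self_pow₀ one_le_base (by lia)
    calc ‖x‖ ^ m * ‖iteratedFDeriv ℝ n (Complex.exp ∘ h) x‖
        ≤ (1 + ‖x‖) ^ m *
            (n.factorial * ‖Complex.exp (h x)‖ * ((1 + C) * (1 + ‖x‖) ^ k) ^ n) := by
          gcongr
          linarith
      _ = n.factorial * (1 + C) ^ n * ((1 + ‖x‖) ^ (m + k * n) * ‖Complex.exp (h x)‖) := by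
          rw [mul_pow, pow_add, pow_mul]
          ring
      _ ≤ _ := mul_le_mul_of_nonneg_left (one_add_norm_pow_mul_norm_cexp_le hb _ x) (by positivity)

end ExpSchwartz

section SymplecticForm

variable {d : ℕ}

instance : (volume : Measure (PhS d)).IsAddHaarMeasure :=
  inferInstanceAs (Measure.prod volume volume).IsAddHaarMeasure

instance : (volume : Measure (PhS d)).IsNegInvariant :=
  Measure.IsAddHaarMeasure.isNegInvariant_of_regular _

lemma symplForm_add_left (X Y Z : PhS d) :
    symplForm (X + Y) Z = symplForm X Z + symplForm Y Z := by
  simp only [symplForm, Prod.fst_add, Prod.snd_add, inner_add_left, inner_add_right]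
  ring

lemma symplForm_smul_left (r : ℝ) (X Y : PhS d) : symplForm (r • X) Y = r * symplForm X Y := by
  simp only [symplForm, Prod.smul_fst, Prod.smul_snd, real_inner_smul_left, real_inner_smul_right]
  ring

lemma symplForm_swap (X Y : PhS d) : symplForm X Y = -symplForm Y X := by
  rw [symplForm, symplForm, real_inner_comm, real_inner_comm Y.2]
  ring

lemma symplForm_self (X : PhS d) : symplForm X X = 0 := by
  linarith [symplForm_swap X X]

lemma symplForm_neg_left (X Y : PhS d) : symplForm (-X) Y = -symplForm X Y := by
  simpa using symplForm_smul_left (-1) X Y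

lemma symplForm_sub_left (X Y Z : PhS d) :
    symplForm (X - Y) Z = symplForm X Z - symplForm Y Z := by
  rw [sub_eq_add_neg, symplForm_add_left, symplForm_neg_left, sub_eq_add_neg]

lemma symplForm_add_right (X Y Z : PhS d) :
    symplForm X (Y + Z) = symplForm X Y + symplForm X Z := by
  simp only [symplForm_swap X, symplForm_add_left, neg_add]

lemma symplForm_smul_right (r : ℝ) (X Y : PhS d) : symplForm X (r • Y) = r * symplForm X Y := by
  simp only [symplForm_swap X, symplForm_smul_left, mul_neg]

lemma symplForm_neg_right (X Y : PhS d) : symplForm X (-Y) = -symplForm X Y := by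
  simp only [symplForm_swap X, symplForm_neg_left]

lemma symplForm_sub_right (X Y Z : PhS d) :
    symplForm X (Y - Z) = symplForm X Y - symplForm X Z := by
  rw [sub_eq_add_neg, symplForm_add_right, symplForm_neg_right, sub_eq_add_neg]

lemma continuous_symplForm : Continuous fun P : PhS d × PhS d => symplForm P.1 P.2 := by
  unfold symplForm
  fun_prop

lemma hasTemperateGrowth_symplForm (X : PhS d) : (symplForm X).HasTemperateGrowth := by
  let φ : PhS d →L[ℝ] ℝ := innerSL ℝ X.2 ∘L .fst ℝ _ _ - innerSL ℝ X.1 ∘L .snd ℝ _ _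
  have hφ : symplForm X = φ := by
    funext Y
    simp [φ, symplForm, real_inner_comm]
  rw [hφ]
  exact φ.hasTemperateGrowth

/-- The squared Euclidean norm on phase space; the norm `‖X‖` of the product type `PhS d` is
instead the maximum of the norms of the two components. -/
def euclideanSq (X : PhS d) : ℝ := ‖X.1‖ ^ 2 + ‖X.2‖ ^ 2

lemma sq_norm_le_euclideanSq (X : PhS d) : ‖X‖ ^ 2 ≤ euclideanSq X := by
  rw [Prod.norm_def, euclideanSq]
  rcases max_choice ‖X.1‖ ‖X.2‖ with h | h <;> rw [h] <;>
    nlinarith [sq_nonneg ‖X.1‖, sq_nonneg ‖X.2‖]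

lemma euclideanSq_smul (r : ℝ) (X : PhS d) : euclideanSq (r • X) = r ^ 2 * euclideanSq X := by
  simp only [euclideanSq, Prod.smul_fst, Prod.smul_snd, norm_smul, mul_pow, Real.norm_eq_abs,
    sq_abs]
  ring

lemma euclideanSq_neg (X : PhS d) : euclideanSq (-X) = euclideanSq X := by
  simp [euclideanSq]

lemma euclideanSq_sub_comm (X Y : PhS d) : euclideanSq (X - Y) = euclideanSq (Y - X) := by
  rw [← euclideanSq_neg, neg_sub]

lemma euclideanSq_add_add_euclideanSq_sub (X Y : PhS d) :
    euclideanSq (X + Y) + euclideanSq (X - Y) = 2 * (euclideanSq X + euclideanSq Y) := by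
  have h₁ := parallelogram_law_with_norm ℝ X.1 Y.1
  have h₂ := parallelogram_law_with_norm ℝ X.2 Y.2
  simp only [euclideanSq, Prod.fst_add, Prod.snd_add, Prod.fst_sub, Prod.snd_sub]
  linarith

lemma hasTemperateGrowth_euclideanSq : (euclideanSq : PhS d → ℝ).HasTemperateGrowth := by
  let E := EuclideanSpace ℝ (Fin d)
  have h_norm_sq := Function.hasTemperateGrowth_norm_sq (H := E)
  exact (h_norm_sq.comp (ContinuousLinearMap.fst ℝ E E).hasTemperateGrowth).add
    (h_norm_sq.comp (ContinuousLinearMap.snd ℝ E E).hasTemperateGrowth)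

end SymplecticForm

section CoherentUnits

/-- The number `exp(is - q)`, with its phase `s` and its rate of decay `q` kept apart. -/
def gaussPhase (s q : ℝ) : ℂ := Complex.exp (s * Complex.I - q)

lemma gaussPhase_mul (s q s' q' : ℝ) :
    gaussPhase s q * gaussPhase s' q' = gaussPhase (s + s') (q + q') := by
  rw [gaussPhase, gaussPhase, ← Complex.exp_add, gaussPhase]
  congr 1
  push_cast
  ring

lemma norm_gaussPhase (s q : ℝ) : ‖gaussPhase s q‖ = Real.exp (-q) := by
  simp [gaussPhase, Complex.norm_exp]

lemma cexp_two_mul_I_mul (s : ℝ) : Complex.exp (2 * Complex.I * s) = gaussPhase (2 * s) 0 := by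
  rw [gaussPhase]
  congr 1
  push_cast
  ring

lemma norm_cexp_two_mul_I_mul (s : ℝ) : ‖Complex.exp (2 * Complex.I * s)‖ = 1 := by
  rw [cexp_two_mul_I_mul, norm_gaussPhase, neg_zero, Real.exp_zero]

variable {d : ℕ}

lemma integral_gaussPhase_symplForm {b : ℝ} (hb : 0 < b) (X : PhS d) :
    ∫ Z : PhS d, gaussPhase (2 * symplForm X Z) (b * euclideanSq Z) =
      (Real.pi / b : ℂ) ^ d * gaussPhase 0 (euclideanSq X / b) := by
  let E := EuclideanSpace ℝ (Fin d)
  have hb' : (b : ℂ) ≠ 0 := by exact_mod_cast hb.ne'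
  have h_factor (Z : PhS d) : gaussPhase (2 * symplForm X Z) (b * euclideanSq Z) =
      Complex.exp (-b * ‖Z.1‖ ^ 2 + 2 * Complex.I * ⟪X.2, Z.1⟫) *
        Complex.exp (-b * ‖Z.2‖ ^ 2 + -(2 * Complex.I) * ⟪X.1, Z.2⟫) := by
    rw [gaussPhase, symplForm, euclideanSq, ← Complex.exp_add, real_inner_comm X.2 Z.1]
    congr 1
    push_cast
    ring
  have h_const : (Real.pi / b : ℂ) ^ (Fintype.card (Fin d) / 2 : ℂ) *
      (Real.pi / b : ℂ) ^ (Fintype.card (Fin d) / 2 : ℂ) = (Real.pi / b : ℂ) ^ d := by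
    rw [← Complex.cpow_add _ _ (div_ne_zero (by simp) hb'), add_halves, Fintype.card_fin,
      Complex.cpow_natCast]
  have h_exp : Complex.exp ((2 * Complex.I) ^ 2 * ‖X.2‖ ^ 2 / (4 * b)) *
      Complex.exp ((-(2 * Complex.I)) ^ 2 * ‖X.1‖ ^ 2 / (4 * b)) =
        gaussPhase 0 (euclideanSq X / b) := by
    rw [← Complex.exp_add, gaussPhase, euclideanSq, neg_sq, mul_pow, Complex.I_sq]
    congr 1
    push_cast
    field_simp
    ring
  have h_re : 0 < (b : ℂ).re := by simpa using hb
  simp_rw [h_factor]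
  rw [Measure.volume_eq_prod, integral_prod_mul
    (fun z : E => Complex.exp (-b * ‖z‖ ^ 2 + 2 * Complex.I * ⟪X.2, z⟫))
    (fun z : E => Complex.exp (-b * ‖z‖ ^ 2 + -(2 * Complex.I) * ⟪X.1, z⟫)),
    GaussianFourier.integral_cexp_neg_mul_sq_norm_add_of_euclideanSpace h_re,
    GaussianFourier.integral_cexp_neg_mul_sq_norm_add_of_euclideanSpace h_re,
    ← h_const, ← h_exp]
  ring

lemma integral_gaussPhase_symplForm_sub {b : ℝ} (hb : 0 < b) (X U : PhS d) (s q : ℝ) :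
    ∫ Z : PhS d, gaussPhase (2 * symplForm X Z + s) (b * euclideanSq (Z - U) + q) =
      (Real.pi / b : ℂ) ^ d *
        gaussPhase (2 * symplForm X U + s) (euclideanSq X / b + q) := by
  have h_shift (Z : PhS d) : gaussPhase (2 * symplForm X Z + s) (b * euclideanSq (Z - U) + q) =
      gaussPhase (2 * symplForm X (Z - U)) (b * euclideanSq (Z - U)) *
        gaussPhase (2 * symplForm X U + s) q := by
    rw [gaussPhase_mul, symplForm_sub_right]
    congr 1
    ring
  simp_rw [h_shift]
  rw [integral_mul_const, integral_sub_right_eq_self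
    (fun Z => gaussPhase (2 * symplForm X Z) (b * euclideanSq Z)) U,
    integral_gaussPhase_symplForm hb, mul_assoc, gaussPhase_mul, zero_add]

/-- The Weyl symbol `E_{αβ}`, up to normalisation, of the rank-one operator
`f ↦ ⟨f, φ_β⟩ φ_α`, where `φ_α` is the Gaussian coherent state centred at `α`. -/
def coherentUnit (α β : PhS d) : SchwartzMap (PhS d) ℂ :=
  expSchwartz
    (fun X => (symplForm (α - β) X - symplForm α β / 2 : ℝ) * Complex.I -
      (euclideanSq (X - (2⁻¹ : ℝ) • (α + β)) : ℝ))
    (by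
      have h_ofReal := Function.Complex.hasTemperateGrowth_ofReal
      exact ((h_ofReal.comp ((hasTemperateGrowth_symplForm _).sub (.const _))).mul (.const _)).sub
        (h_ofReal.comp (hasTemperateGrowth_euclideanSq.comp (.sub .id (.const _)))))
    (by
      set U := (2⁻¹ : ℝ) • (α + β)
      refine ⟨1 + ‖U‖, fun X => ?_⟩
      have h_norm : ‖X‖ ≤ ‖X - U‖ + ‖U‖ := by simpa using norm_add_le (X - U) U
      simp only [Complex.sub_re, Complex.re_ofReal_mul, Complex.I_re, Complex.ofReal_re]
      nlinarith [sq_norm_le_euclideanSq (X - U), sq_nonneg (‖X - U‖ - 1), norm_nonneg (X - U)])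

lemma coherentUnit_apply (α β X : PhS d) :
    coherentUnit α β X = gaussPhase (symplForm (α - β) X - symplForm α β / 2)
      (euclideanSq (X - (2⁻¹ : ℝ) • (α + β))) := rfl

lemma coherentUnit_zero_zero (X : PhS d) :
    coherentUnit 0 0 X = gaussPhase 0 (euclideanSq X) := by
  simp [coherentUnit_apply, symplForm]

/-- The inner product `⟨φ_γ, φ_β⟩` of two normalised Gaussian coherent states. -/
def coherentOverlap (β γ : PhS d) : ℂ :=
  gaussPhase (-symplForm β γ / 2) (euclideanSq (β - γ) / 4)

lemma norm_coherentOverlap (β γ : PhS d) :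
    ‖coherentOverlap β γ‖ = Real.exp (-(euclideanSq (β - γ) / 4)) := norm_gaussPhase _ _

lemma norm_coherentOverlap_le_inv {β γ : PhS d} {R : ℝ} (hR : 0 < R) (hβγ : R ≤ dist β γ) :
    ‖coherentOverlap β γ‖ ≤ R⁻¹ := by
  have h_sq : R ^ 2 ≤ euclideanSq (β - γ) :=
    (pow_le_pow_left₀ hR.le (dist_eq_norm β γ ▸ hβγ) 2).trans (sq_norm_le_euclideanSq _)
  rw [norm_coherentOverlap, Real.exp_neg]
  gcongr
  nlinarith [Real.add_one_le_exp (euclideanSq (β - γ) / 4), sq_nonneg (R / 2 - 1)]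

lemma coherentOverlap_self (β : PhS d) : coherentOverlap β β = 1 := by
  simp [coherentOverlap, gaussPhase, symplForm_self, euclideanSq]

lemma coherentOverlap_neg_neg (β γ : PhS d) :
    coherentOverlap (-β) (-γ) = coherentOverlap β γ := by
  rw [coherentOverlap, coherentOverlap, symplForm_neg_left, symplForm_neg_right, neg_neg,
    neg_sub_neg, euclideanSq_sub_comm]

lemma coherentUnit_eq_gaussPhase_mul_coherentOverlap (α β X : PhS d) :
    coherentUnit α β X =
      gaussPhase (symplForm α X) 0 * coherentOverlap β ((2 : ℝ) • X - α) := by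
  have h_arg : β - ((2 : ℝ) • X - α) = (-2 : ℝ) • (X - (2⁻¹ : ℝ) • (α + β)) := by module
  rw [coherentOverlap, coherentUnit_apply, gaussPhase_mul, h_arg, euclideanSq_smul,
    symplForm_swap α β]
  simp only [symplForm_sub_left, symplForm_sub_right, symplForm_smul_right]
  congr 1 <;> ring

lemma coherentUnit_sub_mul_cexp (α β X Y : PhS d) :
    coherentUnit α β (X - Y) * Complex.exp (2 * Complex.I * symplForm X Y) =
      gaussPhase (symplForm α X) 0 * coherentUnit ((2 : ℝ) • X - α) (-β) Y := by
  have h_arg : Y - (2⁻¹ : ℝ) • ((2 : ℝ) • X - α + -β) = -(X - Y - (2⁻¹ : ℝ) • (α + β)) := by module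
  rw [cexp_two_mul_I_mul, coherentUnit_apply, coherentUnit_apply, gaussPhase_mul, gaussPhase_mul,
    h_arg, euclideanSq_neg, symplForm_swap α β]
  simp only [symplForm_sub_left, symplForm_sub_right, symplForm_smul_left, symplForm_neg_left,
    symplForm_neg_right, symplForm_swap X β, symplForm_swap α β]
  congr 1 <;> ring

lemma symplFT_coherentUnit (α β : PhS d) :
    symplFT d (coherentUnit α β) = coherentUnit (-α) β := by
  funext X
  have h_integrand (Y : PhS d) :
      coherentUnit α β Y * Complex.exp (2 * Complex.I * symplForm X Y) =
        gaussPhase (2 * symplForm ((2⁻¹ : ℝ) • (α - β) + X) Y + -(symplForm α β / 2))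
          (1 * euclideanSq (Y - (2⁻¹ : ℝ) • (α + β)) + 0) := by
    rw [cexp_two_mul_I_mul, coherentUnit_apply, gaussPhase_mul, symplForm_add_left,
      symplForm_smul_left]
    congr 1 <;> ring
  have h_arg : X - (2⁻¹ : ℝ) • (-α + β) = (2⁻¹ : ℝ) • (α - β) + X := by module
  simp_rw [symplFT, h_integrand]
  rw [integral_gaussPhase_symplForm_sub one_pos, Complex.ofReal_one, div_one,
    inv_mul_cancel_left₀ (by simp), coherentUnit_apply, h_arg]
  simp only [symplForm_add_left, symplForm_sub_left, symplForm_smul_left, symplForm_smul_right,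
    symplForm_add_right, symplForm_neg_left, symplForm_self, symplForm_swap β α, symplForm_swap X]
  congr 1 <;> ring

lemma integral_coherentUnit_mul_coherentUnit (α β γ δ : PhS d) :
    ∫ Z, coherentUnit α β Z * coherentUnit γ δ Z =
      (Real.pi / 2 : ℂ) ^ d * (coherentOverlap β γ * coherentOverlap δ α) := by
  set U := (2⁻¹ : ℝ) • (α + β) with hU
  set U' := (2⁻¹ : ℝ) • (γ + δ) with hU'
  set V := (2⁻¹ : ℝ) • (α - β + (γ - δ)) with hV
  have h_integrand (Z : PhS d) : coherentUnit α β Z * coherentUnit γ δ Z =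
      gaussPhase (2 * symplForm V Z + -((symplForm α β + symplForm γ δ) / 2))
        (2 * euclideanSq (Z - (2⁻¹ : ℝ) • (U + U')) + euclideanSq (U - U') / 2) := by
    have h_parallelogram := euclideanSq_add_add_euclideanSq_sub
      (Z - (2⁻¹ : ℝ) • (U + U')) ((2⁻¹ : ℝ) • (U - U'))
    have h_add : Z - (2⁻¹ : ℝ) • (U + U') + (2⁻¹ : ℝ) • (U - U') = Z - U' := by module
    have h_sub : Z - (2⁻¹ : ℝ) • (U + U') - (2⁻¹ : ℝ) • (U - U') = Z - U := by module
    rw [h_add, h_sub, euclideanSq_smul] at h_parallelogram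
    rw [coherentUnit_apply, coherentUnit_apply, gaussPhase_mul, hV, symplForm_smul_left,
      symplForm_add_left, ← hU, ← hU']
    congr 1 <;> linarith
  have h_decay : euclideanSq V / 2 + euclideanSq (U - U') / 2 =
      euclideanSq (β - γ) / 4 + euclideanSq (δ - α) / 4 := by
    have h_parallelogram := euclideanSq_add_add_euclideanSq_sub
      ((2⁻¹ : ℝ) • (β - γ)) ((2⁻¹ : ℝ) • (δ - α))
    have h_add : (2⁻¹ : ℝ) • (β - γ) + (2⁻¹ : ℝ) • (δ - α) = -V := by module
    have h_sub : (2⁻¹ : ℝ) • (β - γ) - (2⁻¹ : ℝ) • (δ - α) = U - U' := by module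
    rw [h_add, h_sub, euclideanSq_neg, euclideanSq_smul _ (β - γ),
      euclideanSq_smul _ (δ - α)] at h_parallelogram
    linarith
  simp_rw [h_integrand]
  rw [integral_gaussPhase_symplForm_sub two_pos, h_decay, coherentOverlap, coherentOverlap,
    gaussPhase_mul, Complex.ofReal_ofNat]
  congr 2
  simp only [hU, hU', hV, symplForm_add_left, symplForm_sub_left, symplForm_smul_left,
    symplForm_smul_right, symplForm_add_right, symplForm_self, symplForm_swap β α,
    symplForm_swap γ α, symplForm_swap γ β, symplForm_swap δ α, symplForm_swap δ β,
    symplForm_swap δ γ]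
  ring

lemma weylProd_apply (a b : PhS d → ℂ) (X : PhS d) :
    weylProd d a b X = ((Real.pi : ℂ) ^ d)⁻¹ *
      ∫ Y, a (X - Y) * symplFT d b Y * Complex.exp (2 * Complex.I * symplForm X Y) := by
  have := Real.pi_pos
  have h_const :
      (2 * Real.pi) ^ (-(d : ℝ) / 2) * (2 / Real.pi) ^ ((d : ℝ) / 2) = (Real.pi ^ d)⁻¹ := by
    rw [neg_div, Real.rpow_neg (by positivity), ← Real.inv_rpow (by positivity),
      ← Real.mul_rpow (by positivity) (by positivity),
      show (2 * Real.pi)⁻¹ * (2 / Real.pi) = (Real.pi⁻¹) ^ (2 : ℝ) by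
        rw [Real.rpow_two]; field_simp,
      ← Real.rpow_mul (by positivity), mul_div_cancel₀ _ two_ne_zero, Real.rpow_natCast, inv_pow]
  rw [weylProd, twistConv, ← mul_assoc]
  congr 1
  exact_mod_cast congrArg Complex.ofReal h_const

lemma weylProd_coherentUnit (α β γ δ : PhS d) :
    weylProd d (coherentUnit α β) (coherentUnit γ δ) =
      ((2 : ℂ) ^ d)⁻¹ • coherentOverlap β γ • ⇑(coherentUnit α δ) := by
  funext X
  have h_integrand (Y : PhS d) : coherentUnit α β (X - Y) * coherentUnit (-γ) δ Y *
      Complex.exp (2 * Complex.I * symplForm X Y) = gaussPhase (symplForm α X) 0 *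
        (coherentUnit ((2 : ℝ) • X - α) (-β) Y * coherentUnit (-γ) δ Y) := by
    rw [mul_right_comm, coherentUnit_sub_mul_cexp, mul_assoc]
  simp_rw [weylProd_apply, symplFT_coherentUnit, h_integrand]
  rw [integral_const_mul, integral_coherentUnit_mul_coherentUnit, coherentOverlap_neg_neg,
    Pi.smul_apply, Pi.smul_apply, smul_eq_mul, smul_eq_mul,
    coherentUnit_eq_gaussPhase_mul_coherentOverlap α δ X, div_pow]
  have hπ : (Real.pi : ℂ) ≠ 0 := by simp
  field_simp

end CoherentUnits

section SymplecticFourier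

variable {d : ℕ}

/-- The linear isomorphism `X ↦ π⁻¹ (-X.2, X.1)` onto phase space with its Euclidean norm. It turns
the phase `2σ(X, Y)` of the symplectic Fourier transform into the phase `-2π⟨Y, X⟩` of Mathlib's
Fourier transform. -/
def symplRotation (d : ℕ) :
    PhS d ≃L[ℝ] WithLp 2 (EuclideanSpace ℝ (Fin d) × EuclideanSpace ℝ (Fin d)) :=
  ((ContinuousLinearEquiv.prodComm ℝ _ _).trans
    ((ContinuousLinearEquiv.smulLeft (Units.mk0 (-Real.pi⁻¹) (by simp))).prodCongr
      (ContinuousLinearEquiv.smulLeft (Units.mk0 Real.pi⁻¹ (by simp))))).trans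
    (WithLp.prodContinuousLinearEquiv 2 ℝ _ _).symm

lemma inner_toLp_symplRotation (X Y : PhS d) :
    ⟪WithLp.toLp 2 Y, symplRotation d X⟫ = -(Real.pi⁻¹ * symplForm X Y) := by
  simp only [symplRotation, ContinuousLinearEquiv.trans_apply, WithLp.prod_inner_apply,
    WithLp.prodContinuousLinearEquiv_symm_apply, ContinuousLinearEquiv.prodCongr_apply,
    ContinuousLinearEquiv.prodComm_apply, ContinuousLinearEquiv.smulLeft_apply_apply,
    Units.smul_mk0, Prod.fst_swap, Prod.snd_swap, inner_smul_right, symplForm,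
    real_inner_comm Y.2]
  ring

/-- The symplectic Fourier transform as a continuous linear operator on Schwartz functions. -/
def symplFTSchwartz (d : ℕ) : SchwartzMap (PhS d) ℂ →L[ℂ] SchwartzMap (PhS d) ℂ :=
  ((Real.pi : ℂ) ^ d)⁻¹ • SchwartzMap.compCLMOfContinuousLinearEquiv ℂ (symplRotation d) ∘L
    (FourierTransform.fourierCLE ℂ _).toContinuousLinearMap ∘L
      SchwartzMap.compCLMOfContinuousLinearEquiv ℂ (WithLp.prodContinuousLinearEquiv 2 ℝ _ _)

lemma coe_symplFTSchwartz (f : SchwartzMap (PhS d) ℂ) : ⇑(symplFTSchwartz d f) = symplFT d f := by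
  funext X
  simp only [symplFTSchwartz, smul_apply, smul_eq_mul, ContinuousLinearMap.comp_apply,
    ContinuousLinearEquiv.coe_coe, FourierTransform.fourierCLE_apply,
    SchwartzMap.compCLMOfContinuousLinearEquiv_apply, Function.comp_apply,
    SchwartzMap.fourier_coe, symplFT]
  congr 1
  rw [Real.fourier_eq', ← (WithLp.volume_preserving_toLp _ _).integral_comp
    (MeasurableEquiv.toLp 2 _).measurableEmbedding]
  refine integral_congr_ae (ae_of_all _ fun Y => ?_)
  have h_phase : ((-2 * Real.pi * -(Real.pi⁻¹ * symplForm X Y) : ℝ) : ℂ) * Complex.I =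
      2 * Complex.I * symplForm X Y := by
    push_cast
    field_simp
  simp only [inner_toLp_symplRotation, h_phase, smul_eq_mul, mul_comm (Complex.exp _)]
  rfl

lemma symplFTSchwartz_ne_zero {f : SchwartzMap (PhS d) ℂ} (hf : f ≠ 0) :
    symplFTSchwartz d f ≠ 0 := by
  contrapose! hf
  set g := SchwartzMap.compCLMOfContinuousLinearEquiv ℂ
    (WithLp.prodContinuousLinearEquiv 2 ℝ (EuclideanSpace ℝ (Fin d)) (EuclideanSpace ℝ (Fin d))) f
  have hg_fourier : FourierTransform.fourier g = 0 := by
    ext w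
    simpa [symplFTSchwartz, g] using DFunLike.congr_fun hf ((symplRotation d).symm w)
  have hg : g = 0 := (FourierTransform.fourierEquiv ℂ _).map_eq_zero_iff.1 hg_fourier
  ext X
  exact DFunLike.congr_fun hg (WithLp.toLp 2 X)

/-- The symplectic form as a bilinear map, scaled by `π⁻¹` so that
`VectorFourier.fourierIntegral` with respect to it is the integral in `symplFT`. -/
def symplBilin (d : ℕ) : PhS d →ₗ[ℝ] PhS d →ₗ[ℝ] ℝ :=
  Real.pi⁻¹ • LinearMap.mk₂ ℝ symplForm symplForm_add_left symplForm_smul_left symplForm_add_right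
    symplForm_smul_right

lemma symplFT_eq_fourierIntegral (f : PhS d → ℂ) (X : PhS d) :
    symplFT d f X = ((Real.pi : ℂ) ^ d)⁻¹ *
      VectorFourier.fourierIntegral Real.fourierChar volume (symplBilin d) f X := by
  rw [symplFT, VectorFourier.fourierIntegral]
  congr 2
  funext Y
  rw [Circle.smul_def, Real.fourierChar_apply, smul_eq_mul, mul_comm]
  congr 2
  simp only [symplBilin, LinearMap.smul_apply, LinearMap.mk₂_apply, smul_eq_mul,
    symplForm_swap Y X]
  push_cast
  field_simp

lemma integral_symplFT_mul {f g : PhS d → ℂ} (hf : Integrable f) (hg : Integrable g) :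
    ∫ X, symplFT d f X * g X = ∫ Y, f Y * symplFT d g (-Y) := by
  have h_cont : Continuous fun P : PhS d × PhS d => symplBilin d P.1 P.2 :=
    continuous_symplForm.const_smul Real.pi⁻¹
  have h_flip := VectorFourier.integral_fourierIntegral_smul_eq_flip (μ := volume) (ν := volume)
    Real.continuous_fourierChar h_cont hf hg
  have h_swap (Y : PhS d) :
      VectorFourier.fourierIntegral Real.fourierChar volume (symplBilin d).flip g Y =
        VectorFourier.fourierIntegral Real.fourierChar volume (symplBilin d) g (-Y) := by
    simp only [VectorFourier.fourierIntegral, LinearMap.flip_apply, map_neg, symplBilin,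
      LinearMap.smul_apply, LinearMap.mk₂_apply, smul_eq_mul, symplForm_swap Y, mul_neg]
  simp only [smul_eq_mul, h_swap] at h_flip
  simp only [symplFT_eq_fourierIntegral, mul_assoc, mul_left_comm (f _), integral_const_mul, h_flip]

end SymplecticFourier

section DecayWeight

variable {E : Type*} [NormedAddCommGroup E]

lemma one_add_norm_le_mul (x z : E) : 1 + ‖x‖ ≤ (1 + ‖z‖) * (1 + ‖z - x‖) := by
  have h_triangle : ‖x‖ ≤ ‖z‖ + ‖z - x‖ := by simpa using norm_sub_le z (z - x)
  nlinarith [mul_nonneg (norm_nonneg z) (norm_nonneg (z - x))]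

variable [NormedSpace ℝ E]

lemma exists_one_add_norm_pow_mul_integral_le [MeasurableSpace E] [BorelSpace E]
    [SecondCountableTopology E] (μ : Measure E) [μ.HasTemperateGrowth]
    (f g : SchwartzMap E ℂ) (n : ℕ) :
    ∃ C, ∀ x, (1 + ‖x‖) ^ n * ∫ z, ‖f z‖ * ‖g (z - x)‖ ∂μ ≤ C := by
  obtain ⟨Cg, hCg⟩ : ∃ C, ∀ z, (1 + ‖z‖) ^ n * ‖g z‖ ≤ C := by
    have h_seminorm := SchwartzMap.one_add_le_sup_seminorm_apply (𝕜 := ℝ)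
      (le_refl (n, 0).1) (le_refl (n, 0).2) g
    simp only [norm_iteratedFDeriv_zero] at h_seminorm
    exact ⟨_, h_seminorm⟩
  have hf_int : Integrable (fun z => (1 + ‖z‖) ^ n * ‖f z‖) μ := by
    simp only [add_comm (1 : ℝ), add_pow, one_pow, mul_one, Finset.sum_mul,
      mul_right_comm _ _ ‖f _‖]
    exact integrable_finsetSum _ fun k _ => (f.integrable_pow_mul μ k).mul_const _
  refine ⟨∫ z, (1 + ‖z‖) ^ n * ‖f z‖ * Cg ∂μ, fun x => ?_⟩
  rw [← integral_const_mul]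
  refine integral_mono_of_nonneg (ae_of_all _ fun z => by positivity) (hf_int.mul_const Cg)
    (ae_of_all _ fun z => ?_)
  calc (1 + ‖x‖) ^ n * (‖f z‖ * ‖g (z - x)‖)
      ≤ ((1 + ‖z‖) * (1 + ‖z - x‖)) ^ n * (‖f z‖ * ‖g (z - x)‖) := by
        gcongr
        exact one_add_norm_le_mul x z
    _ = (1 + ‖z‖) ^ n * ‖f z‖ * ((1 + ‖z - x‖) ^ n * ‖g (z - x)‖) := by rw [mul_pow]; ring
    _ ≤ (1 + ‖z‖) ^ n * ‖f z‖ * Cg := by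
        gcongr
        exact hCg _

/-- The integrable weight `(1 + ‖x‖)^{-(n+1)}` on a normed space of dimension `n`. -/
def decayWeight (x : E) : ℝ := ((1 + ‖x‖) ^ (Module.finrank ℝ E + 1))⁻¹

lemma decayWeight_nonneg (x : E) : 0 ≤ decayWeight x := by
  unfold decayWeight
  positivity

lemma decayWeight_le_inv (x : E) : decayWeight x ≤ (1 + ‖x‖)⁻¹ := by
  unfold decayWeight
  gcongr
  exact le_self_pow₀ (by linarith [norm_nonneg x]) (by simp)

lemma decayWeight_le_one (x : E) : decayWeight x ≤ 1 :=
  (decayWeight_le_inv x).trans (inv_le_one_of_one_le₀ (by linarith [norm_nonneg x]))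

lemma decayWeight_sub_le_inv {x z z' : E} {K T : ℝ} (hT : 0 < T) (hz : ‖x - z‖ ≤ K)
    (hzz' : K + T ≤ dist z z') : decayWeight (x - z') ≤ T⁻¹ := by
  refine (decayWeight_le_inv _).trans ?_
  have h_triangle := dist_triangle_left z z' x
  rw [dist_eq_norm x, dist_eq_norm x] at h_triangle
  gcongr
  linarith

lemma le_mul_decayWeight_mul_decayWeight {v C₁ C₂ : ℝ} (hv : 0 ≤ v) {x y : E}
    (hx : (1 + ‖x‖) ^ (2 * (Module.finrank ℝ E + 1)) * v ≤ C₁)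
    (hy : (1 + ‖y‖) ^ (2 * (Module.finrank ℝ E + 1)) * v ≤ C₂) :
    v ≤ (C₁ + C₂) * (decayWeight x * decayWeight y) := by
  rw [decayWeight, decayWeight, ← mul_inv, ← div_eq_mul_inv, le_div_iff₀ (by positivity)]
  rw [mul_comm 2, pow_mul] at hx hy
  set a := (1 + ‖x‖) ^ (Module.finrank ℝ E + 1)
  set b := (1 + ‖y‖) ^ (Module.finrank ℝ E + 1)
  nlinarith [mul_nonneg hv (sq_nonneg (a - b)), mul_nonneg hv (sq_nonneg (a + b))]

section Integral

variable [MeasurableSpace E] [BorelSpace E] [FiniteDimensional ℝ E] (μ : Measure E)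
  [μ.IsAddHaarMeasure]

lemma integrable_decayWeight : Integrable (decayWeight : E → ℝ) μ := by
  have h_rpow := integrable_one_add_norm (E := E) (μ := μ) (r := (Module.finrank ℝ E + 1 : ℕ))
    (by simp)
  refine h_rpow.congr (ae_of_all _ fun x => ?_)
  beta_reduce
  rw [decayWeight, Real.rpow_neg (by positivity), Real.rpow_natCast]

variable {ι : Type*} [Fintype ι] (c : ι → ℝ) (z : ι → E)

lemma integrable_sum_mul_decayWeight_sub :
    Integrable (fun x => ∑ i, c i * decayWeight (x - z i)) μ :=
  integrable_finsetSum _ fun i _ => ((integrable_decayWeight μ).comp_sub_right (z i)).const_mul _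

lemma integral_sum_mul_decayWeight_sub :
    ∫ x, ∑ i, c i * decayWeight (x - z i) ∂μ = (∑ i, c i) * ∫ x, decayWeight x ∂μ := by
  rw [integral_finsetSum _ fun i _ =>
    ((integrable_decayWeight μ).comp_sub_right (z i)).const_mul (c i), Finset.sum_mul]
  simp_rw [integral_const_mul, integral_sub_right_eq_self (μ := μ) decayWeight]

end Integral

end DecayWeight

section ShortTimeFourier

variable {d : ℕ} (Φ : SchwartzMap (PhS d) ℂ)

/-- The complex conjugate of a Schwartz function. -/
def conjSchwartz : SchwartzMap (PhS d) ℂ :=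
  SchwartzMap.postcompCLM (Complex.conjCLE : ℂ →L[ℝ] ℂ) Φ

/-- Multiplication by the conjugate of the window `Φ` translated to `X`. -/
def windowCLM (X : PhS d) : SchwartzMap (PhS d) ℂ →L[ℂ] SchwartzMap (PhS d) ℂ :=
  SchwartzMap.smulLeftCLM ℂ (SchwartzMap.compSubConstCLM ℂ X (conjSchwartz Φ))

lemma windowCLM_apply (a : SchwartzMap (PhS d) ℂ) (X Z : PhS d) :
    windowCLM Φ X a Z = a Z * starRingEnd ℂ (Φ (Z - X)) := by
  rw [windowCLM, SchwartzMap.smulLeftCLM_apply_apply (SchwartzMap.hasTemperateGrowth _),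
    smul_eq_mul, mul_comm]
  rfl

lemma symplFTSchwartz_windowCLM (a : SchwartzMap (PhS d) ℂ) (X Y : PhS d) :
    symplFTSchwartz d (windowCLM Φ X a) Y = symplSTFT d Φ a X Y := by
  rw [coe_symplFTSchwartz]
  simp only [symplFT, symplSTFT, windowCLM_apply]

lemma symplSTFT_sum {ι : Type*} (s : Finset ι) (a : ι → SchwartzMap (PhS d) ℂ) (X Y : PhS d) :
    symplSTFT d Φ (∑ i ∈ s, a i : SchwartzMap (PhS d) ℂ) X Y =
      ∑ i ∈ s, symplSTFT d Φ (a i) X Y := by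
  simp only [← symplFTSchwartz_windowCLM, map_sum, sum_apply]

lemma norm_symplSTFT_smul (φ : PhS d → ℂ) (c : ℂ) (a : PhS d → ℂ) (X Y : PhS d) :
    ‖symplSTFT d φ (c • a) X Y‖ = ‖c‖ * ‖symplSTFT d φ a X Y‖ := by
  simp only [symplSTFT, Pi.smul_apply, smul_eq_mul, mul_assoc, integral_const_mul, norm_mul]
  ring

lemma continuous_symplSTFT (a : SchwartzMap (PhS d) ℂ) :
    Continuous fun P : PhS d × PhS d => symplSTFT d Φ a P.1 P.2 := by
  have hΦ_cont := Φ.continuous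
  have ha_cont := a.continuous
  have h_cont : Continuous fun Q : (PhS d × PhS d) × PhS d =>
      a Q.2 * starRingEnd ℂ (Φ (Q.2 - Q.1.1)) *
        Complex.exp (2 * Complex.I * symplForm Q.1.2 Q.2) := by
    unfold symplForm
    fun_prop
  unfold symplSTFT
  refine continuous_const.mul (continuous_of_dominated
    (bound := fun Z => ‖a Z‖ * ‖Φ.toBoundedContinuousFunction‖)
    (fun P => (h_cont.comp (Continuous.prodMk_right P)).aestronglyMeasurable)
    (fun P => ae_of_all _ fun Z => ?_) (a.integrable.norm.mul_const _)
    (ae_of_all _ fun Z => h_cont.comp (Continuous.prodMk_left Z)))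
  rw [norm_mul, norm_mul, norm_cexp_two_mul_I_mul, mul_one, RCLike.norm_conj]
  gcongr
  exact Φ.toBoundedContinuousFunction.norm_coe_le_norm (Z - P.1)

lemma exists_symplSTFT_coherentUnit_ne_zero (hΦ : Φ ≠ 0) :
    ∃ X Y, symplSTFT d Φ (coherentUnit 0 0) X Y ≠ 0 := by
  have h_window : windowCLM Φ 0 (coherentUnit 0 0) ≠ 0 := by
    contrapose! hΦ
    ext Z
    have hZ := DFunLike.congr_fun hΦ Z
    rw [windowCLM_apply, coherentUnit_zero_zero, gaussPhase, sub_zero] at hZ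
    simpa using hZ
  obtain ⟨Y, hY⟩ := DFunLike.ne_iff.1 (symplFTSchwartz_ne_zero h_window)
  exact ⟨0, Y, by rwa [symplFTSchwartz_windowCLM] at hY⟩

lemma norm_symplSTFT_coherentUnit (α β X Y : PhS d) :
    ‖symplSTFT d Φ (coherentUnit α β) X Y‖ =
      ‖symplSTFT d Φ (coherentUnit 0 0) (X - (2⁻¹ : ℝ) • (α + β))
        (Y - (2⁻¹ : ℝ) • (β - α))‖ := by
  set U := (2⁻¹ : ℝ) • (α + β) with hU
  set W := (2⁻¹ : ℝ) • (β - α) with hW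
  have h_integrand (Z : PhS d) :
      coherentUnit α β (Z + U) * starRingEnd ℂ (Φ (Z + U - X)) *
        Complex.exp (2 * Complex.I * symplForm Y (Z + U)) =
      gaussPhase (2 * symplForm (Y - W) U - symplForm α β / 2) 0 *
        (coherentUnit 0 0 Z * starRingEnd ℂ (Φ (Z - (X - U))) *
          Complex.exp (2 * Complex.I * symplForm (Y - W) Z)) := by
    have h_unit : coherentUnit α β (Z + U) * Complex.exp (2 * Complex.I * symplForm Y (Z + U)) =
        gaussPhase (2 * symplForm (Y - W) U - symplForm α β / 2) 0 *
          (coherentUnit 0 0 Z * Complex.exp (2 * Complex.I * symplForm (Y - W) Z)) := by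
      have h_diff : α - β = (-2 : ℝ) • W := by rw [hW]; module
      simp only [cexp_two_mul_I_mul, coherentUnit_zero_zero, coherentUnit_apply α β, gaussPhase_mul,
        ← hU, h_diff, add_sub_cancel_right, symplForm_sub_left, symplForm_add_right,
        symplForm_smul_left]
      congr 1 <;> ring
    rw [mul_right_comm, h_unit, show Z + U - X = Z - (X - U) by abel]
    ring
  rw [symplSTFT, ← integral_add_right_eq_self _ U]
  simp_rw [h_integrand]
  rw [integral_const_mul, mul_left_comm, norm_mul, norm_gaussPhase, neg_zero, Real.exp_zero,
    one_mul, symplSTFT]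

lemma norm_symplSTFT_le_integral (a : PhS d → ℂ) (X Y : PhS d) :
    ‖symplSTFT d Φ a X Y‖ ≤ (Real.pi ^ d)⁻¹ * ∫ Z, ‖a Z‖ * ‖Φ (Z - X)‖ := by
  rw [symplSTFT, norm_mul, norm_inv, norm_pow, Complex.norm_real,
    Real.norm_of_nonneg Real.pi_nonneg]
  gcongr
  refine (norm_integral_le_integral_norm _).trans_eq (integral_congr_ae (ae_of_all _ fun Z => ?_))
  simp only [norm_mul, norm_cexp_two_mul_I_mul, mul_one, RCLike.norm_conj]

lemma exists_one_add_norm_fst_pow_mul_norm_symplSTFT_le (a : SchwartzMap (PhS d) ℂ) (n : ℕ) :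
    ∃ C, ∀ X Y, (1 + ‖X‖) ^ n * ‖symplSTFT d Φ a X Y‖ ≤ C := by
  obtain ⟨C, hC⟩ := exists_one_add_norm_pow_mul_integral_le volume a Φ n
  refine ⟨(Real.pi ^ d)⁻¹ * C, fun X Y => ?_⟩
  calc (1 + ‖X‖) ^ n * ‖symplSTFT d Φ a X Y‖
      ≤ (1 + ‖X‖) ^ n * ((Real.pi ^ d)⁻¹ * ∫ Z, ‖a Z‖ * ‖Φ (Z - X)‖) := by
        gcongr
        exact norm_symplSTFT_le_integral Φ a X Y
    _ = (Real.pi ^ d)⁻¹ * ((1 + ‖X‖) ^ n * ∫ Z, ‖a Z‖ * ‖Φ (Z - X)‖) := mul_left_comm _ _ _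
    _ ≤ (Real.pi ^ d)⁻¹ * C := by
        gcongr
        exact hC X

lemma norm_symplFT_comp_sub (f : PhS d → ℂ) (X Y : PhS d) :
    ‖symplFT d (fun Z => f (Z - X)) Y‖ = ‖symplFT d f Y‖ := by
  have h_integrand (Z : PhS d) : f Z * Complex.exp (2 * Complex.I * symplForm Y (Z + X)) =
      Complex.exp (2 * Complex.I * symplForm Y X) *
        (f Z * Complex.exp (2 * Complex.I * symplForm Y Z)) := by
    rw [symplForm_add_right, Complex.ofReal_add, mul_add, Complex.exp_add]
    ring
  rw [symplFT, ← integral_add_right_eq_self _ X]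
  simp_rw [add_sub_cancel_right, h_integrand]
  rw [integral_const_mul, mul_left_comm, norm_mul, norm_cexp_two_mul_I_mul, one_mul, symplFT]

lemma norm_symplSTFT_coherentUnit_le_integral (X Y : PhS d) :
    ‖symplSTFT d Φ (coherentUnit 0 0) X Y‖ ≤ (Real.pi ^ d)⁻¹ *
      ∫ T, ‖symplFTSchwartz d (conjSchwartz Φ) T‖ * ‖coherentUnit 0 0 (T - Y)‖ := by
  set Ψ := SchwartzMap.compSubConstCLM ℂ X (conjSchwartz Φ)
  have h_modulate (Z : PhS d) :
      coherentUnit 0 0 Z * Complex.exp (2 * Complex.I * symplForm Y Z) = coherentUnit Y (-Y) Z := by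
    rw [cexp_two_mul_I_mul, coherentUnit_zero_zero, coherentUnit_apply, gaussPhase_mul,
      sub_neg_eq_add, symplForm_neg_right, symplForm_self, symplForm_add_left]
    simp [two_mul]
  have h_integral : ∫ Z, coherentUnit 0 0 Z * starRingEnd ℂ (Φ (Z - X)) *
      Complex.exp (2 * Complex.I * symplForm Y Z) =
        ∫ T, coherentUnit (-Y) (-Y) (-T) * symplFTSchwartz d Ψ T := by
    calc _ = ∫ Z, symplFT d (coherentUnit (-Y) (-Y)) Z * Ψ Z := by
            refine integral_congr_ae (ae_of_all _ fun Z => ?_)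
            simp only [symplFT_coherentUnit, neg_neg, ← h_modulate]
            exact mul_right_comm _ _ _
      _ = ∫ T, coherentUnit (-Y) (-Y) T * symplFT d Ψ (-T) :=
            integral_symplFT_mul (coherentUnit _ _).integrable Ψ.integrable
      _ = _ := by
            rw [← integral_neg_eq_self]
            simp only [neg_neg, coe_symplFTSchwartz]
  rw [symplSTFT, h_integral, norm_mul, norm_inv, norm_pow, Complex.norm_real,
    Real.norm_of_nonneg Real.pi_nonneg]
  gcongr
  refine (norm_integral_le_integral_norm _).trans_eq (integral_congr_ae (ae_of_all _ fun T => ?_))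
  have h_reflect : -T - (2⁻¹ : ℝ) • (-Y + -Y) = -(T - Y) := by module
  have h_window : ‖symplFTSchwartz d Ψ T‖ = ‖symplFTSchwartz d (conjSchwartz Φ) T‖ := by
    rw [coe_symplFTSchwartz, coe_symplFTSchwartz]
    exact norm_symplFT_comp_sub (conjSchwartz Φ) X T
  simp only [norm_mul, h_window, coherentUnit_zero_zero, coherentUnit_apply (-Y), norm_gaussPhase,
    h_reflect, euclideanSq_neg]
  exact mul_comm _ _

/-- With constant `D`, the short-time Fourier transform of every `E_{αβ}` decays away from the
phase-space point `((α + β) / 2, (β - α) / 2)` around which it is concentrated. -/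
def HasCoherentDecay (D : ℝ) : Prop :=
  ∀ α β X Y, ‖symplSTFT d Φ (coherentUnit α β) X Y‖ ≤
    D * (decayWeight (X - (2⁻¹ : ℝ) • (α + β)) * decayWeight (Y - (2⁻¹ : ℝ) • (β - α)))

lemma exists_hasCoherentDecay : ∃ D > 0, HasCoherentDecay Φ D := by
  let n := 2 * (Module.finrank ℝ (PhS d) + 1)
  obtain ⟨C₁, hC₁⟩ := exists_one_add_norm_fst_pow_mul_norm_symplSTFT_le Φ (coherentUnit 0 0) n
  obtain ⟨C₂, hC₂⟩ := exists_one_add_norm_pow_mul_integral_le volume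
    (symplFTSchwartz d (conjSchwartz Φ)) (coherentUnit 0 0) n
  have h_snd (X Y : PhS d) :
      (1 + ‖Y‖) ^ n * ‖symplSTFT d Φ (coherentUnit 0 0) X Y‖ ≤ (Real.pi ^ d)⁻¹ * C₂ := by
    calc _ ≤ (1 + ‖Y‖) ^ n * ((Real.pi ^ d)⁻¹ *
          ∫ T, ‖symplFTSchwartz d (conjSchwartz Φ) T‖ * ‖coherentUnit 0 0 (T - Y)‖) := by
          gcongr
          exact norm_symplSTFT_coherentUnit_le_integral Φ X Y
      _ = (Real.pi ^ d)⁻¹ * ((1 + ‖Y‖) ^ n *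
          ∫ T, ‖symplFTSchwartz d (conjSchwartz Φ) T‖ * ‖coherentUnit 0 0 (T - Y)‖) :=
          mul_left_comm _ _ _
      _ ≤ (Real.pi ^ d)⁻¹ * C₂ := by
          gcongr
          exact hC₂ Y
  refine ⟨max 1 (C₁ + (Real.pi ^ d)⁻¹ * C₂), by positivity, fun α β X Y => ?_⟩
  rw [norm_symplSTFT_coherentUnit]
  refine (le_mul_decayWeight_mul_decayWeight (norm_nonneg _) (hC₁ _ _) (h_snd _ _)).trans ?_
  gcongr
  · exact mul_nonneg (decayWeight_nonneg _) (decayWeight_nonneg _)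
  · exact le_max_right _ _

lemma exists_ball_le_norm_symplSTFT_coherentUnit (hΦ : Φ ≠ 0) :
    ∃ δ > 0, ∃ ρ > 0, ∃ X₀ Y₀, ∀ α β X Y,
      X ∈ Metric.ball (X₀ + (2⁻¹ : ℝ) • (α + β)) ρ →
      Y ∈ Metric.ball (Y₀ + (2⁻¹ : ℝ) • (β - α)) ρ →
      δ ≤ ‖symplSTFT d Φ (coherentUnit α β) X Y‖ := by
  obtain ⟨X₀, Y₀, h₀⟩ := exists_symplSTFT_coherentUnit_ne_zero Φ hΦ
  have h_pos := norm_pos_iff.2 h₀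
  have h_cont := (continuous_symplSTFT Φ (coherentUnit 0 0)).norm.tendsto (X₀, Y₀)
  obtain ⟨ρ, hρ, h_ball⟩ := Metric.eventually_nhds_iff_ball.1
    (h_cont.eventually_const_lt (half_lt_self h_pos))
  refine ⟨‖symplSTFT d Φ (coherentUnit 0 0) X₀ Y₀‖ / 2, half_pos h_pos, ρ, hρ, X₀, Y₀,
    fun α β X Y hX hY => ?_⟩
  rw [norm_symplSTFT_coherentUnit Φ α β]
  refine (h_ball (X - (2⁻¹ : ℝ) • (α + β), Y - (2⁻¹ : ℝ) • (β - α)) ?_).le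
  rw [← ball_prod_same, Set.mem_prod, mem_ball_iff_norm, mem_ball_iff_norm]
  rw [mem_ball_iff_norm, ← sub_sub, sub_right_comm] at hX hY
  exact ⟨hX, hY⟩

end ShortTimeFourier

section SeparatedPoints

lemma norm_sub_le_of_mem_ball_add {E : Type*} [SeminormedAddCommGroup E] {x y z : E} {ρ : ℝ}
    (hx : x ∈ Metric.ball (y + z) ρ) : ‖x - z‖ ≤ ‖y‖ + ρ := by
  rw [mem_ball_iff_norm] at hx
  have h_split : x - z = y + (x - (y + z)) := by abel
  linarith [h_split ▸ norm_add_le y (x - (y + z))]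

lemma half_le_norm_sum {E ι : Type*} [SeminormedAddCommGroup E] [Fintype ι]
    {v : ι → E} {δ : ℝ} (hδ : 0 ≤ δ) (i₀ : ι) (hi₀ : δ ≤ ‖v i₀‖)
    (hv : ∀ i ≠ i₀, ‖v i‖ ≤ δ / (2 * Fintype.card ι)) : δ / 2 ≤ ‖∑ i, v i‖ := by
  classical
  have h_card : (0 : ℝ) < Fintype.card ι := Nat.cast_pos.2 (Fintype.card_pos_iff.2 ⟨i₀⟩)
  have h_rest : ‖∑ i ∈ Finset.univ.erase i₀, v i‖ ≤ δ / 2 :=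
    calc ‖∑ i ∈ Finset.univ.erase i₀, v i‖
        ≤ (Finset.univ.erase i₀).card • (δ / (2 * Fintype.card ι)) :=
          (norm_sum_le _ _).trans
            (Finset.sum_le_card_nsmul _ _ _ fun i hi => hv i (Finset.ne_of_mem_erase hi))
      _ ≤ Fintype.card ι * (δ / (2 * Fintype.card ι)) := by
          rw [nsmul_eq_mul]
          gcongr
          exact Finset.card_le_univ _
      _ = δ / 2 := by field_simp
  rw [← Finset.add_sum_erase _ _ (Finset.mem_univ i₀)]
  linarith [norm_le_add_norm_add (v i₀) (∑ i ∈ Finset.univ.erase i₀, v i)]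

variable {E ι : Type*} [NormedAddCommGroup E] {z : ι → E} {R : ℝ}

lemma pairwise_le_dist_smul [NormedSpace ℝ E] {c : ℝ} (hc : 0 ≤ c)
    (hz : Pairwise fun i j => R ≤ dist (z i) (z j)) :
    Pairwise fun i j => c * R ≤ dist (c • z i) (c • z j) := fun i j hij => by
  simpa only [dist_smul₀, Real.norm_of_nonneg hc] using mul_le_mul_of_nonneg_left (hz hij) hc

variable [Fintype ι]

lemma sum_decayWeight_sub_le_two [NormedSpace ℝ E] (hR : 2 * Fintype.card ι ≤ R)
    (hz : Pairwise fun i j => R ≤ dist (z i) (z j)) (x : E) :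
    ∑ i, decayWeight (x - z i) ≤ 2 := by
  classical
  set n := Fintype.card ι
  have h_far (i : ι) (hi : R / 2 ≤ ‖x - z i‖) : decayWeight (x - z i) ≤ (1 + n : ℝ)⁻¹ :=
    (decayWeight_le_inv _).trans (by gcongr; linarith)
  have h_sum_far (s : Finset ι) (hs : ∀ i ∈ s, R / 2 ≤ ‖x - z i‖) :
      ∑ i ∈ s, decayWeight (x - z i) ≤ 1 :=
    calc ∑ i ∈ s, decayWeight (x - z i)
        ≤ s.card • (1 + n : ℝ)⁻¹ := Finset.sum_le_card_nsmul _ _ _ fun i hi => h_far i (hs i hi)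
      _ ≤ n * (1 + n : ℝ)⁻¹ := by
          rw [nsmul_eq_mul]
          gcongr
          exact s.card_le_univ
      _ ≤ 1 := by
          rw [← div_eq_mul_inv, div_le_one (by positivity)]
          linarith
  by_cases h_near : ∃ i, ‖x - z i‖ < R / 2
  · obtain ⟨i, hi⟩ := h_near
    rw [← Finset.add_sum_erase _ _ (Finset.mem_univ i)]
    refine (add_le_add (decayWeight_le_one _) (h_sum_far _ fun j hj => ?_)).trans_eq
      one_add_one_eq_two
    have h_triangle := (hz (Finset.ne_of_mem_erase hj)).trans (dist_triangle_left (z j) (z i) x)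
    rw [dist_eq_norm, dist_eq_norm] at h_triangle
    linarith
  · push Not at h_near
    exact (h_sum_far Finset.univ fun i _ => h_near i).trans one_le_two

lemma measure_iUnion_ball [MeasurableSpace E] [BorelSpace E] (μ : Measure E) [μ.IsAddHaarMeasure]
    {ρ : ℝ} (hρ : ρ + ρ ≤ R) (hz : Pairwise fun i j => R ≤ dist (z i) (z j)) :
    μ (⋃ i, Metric.ball (z i) ρ) = Fintype.card ι * μ (Metric.ball 0 ρ) := by
  rw [measure_iUnion
    (fun i j hij => Metric.ball_disjoint_ball (hρ.trans (hz hij))) fun _ => measurableSet_ball,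
    tsum_fintype]
  simp [Measure.addHaar_ball_center]

end SeparatedPoints

section ModulationNorm

variable {d : ℕ} {p q : ℝ≥0∞}

lemma modNorm_smul (hp : p ≠ 0) (hq : q ≠ 0) (ω : PhS d × PhS d → ℝ) (Φ : PhS d → ℂ)
    (c : ℂ) (a : PhS d → ℂ) :
    modNorm d p q ω Φ (c • a) = ENNReal.ofReal ‖c‖ * modNorm d p q ω Φ a := by
  simp only [modNorm, norm_symplSTFT_smul, mul_assoc, ENNReal.ofReal_mul (norm_nonneg c),
    lpNormENN_const_mul hp ENNReal.ofReal_ne_top, lpNormENN_const_mul hq ENNReal.ofReal_ne_top]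

variable {Φ a : PhS d → ℂ}

lemma modNorm_le_of_majorant (hp : 1 ≤ p) (hq : 1 ≤ q) {G : PhS d → PhS d → ℝ} {h : PhS d → ℝ}
    {M A₁ A₂ : ℝ} (hV : ∀ X Y, ‖symplSTFT d Φ a X Y‖ ≤ G X Y)
    (hG_int : ∀ Y, Integrable fun X => G X Y) (hG : ∀ X Y, G X Y ≤ h Y)
    (hG_integral : ∀ Y, ∫ X, G X Y ≤ h Y * A₁) (hh_int : Integrable h) (hh : ∀ Y, h Y ≤ M)
    (hh_integral : ∫ Y, h Y ≤ M * A₂) :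
    modNorm d p q (fun _ => 1) Φ a ≤
      ENNReal.ofReal M * ENNReal.ofReal A₁ ^ rcp p * ENNReal.ofReal A₂ ^ rcp q := by
  have hG₀ (X Y : PhS d) : 0 ≤ G X Y := (norm_nonneg _).trans (hV X Y)
  have hh₀ (Y : PhS d) : 0 ≤ h Y := (hG₀ 0 Y).trans (hG 0 Y)
  have hM : 0 ≤ M := (hh₀ 0).trans (hh 0)
  have hA₁ : ENNReal.ofReal A₁ ^ rcp p ≠ ∞ :=
    ENNReal.rpow_ne_top_of_nonneg (rcp_nonneg p) ENNReal.ofReal_ne_top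
  have h_inner (Y : PhS d) :
      lpNormENN volume p (fun X => ENNReal.ofReal (‖symplSTFT d Φ a X Y‖ * 1)) ≤
        ENNReal.ofReal (h Y) * ENNReal.ofReal A₁ ^ rcp p := by
    simp only [mul_one]
    refine lpNormENN_le_mul_rpow hp ENNReal.ofReal_ne_top
      (fun X => ENNReal.ofReal_le_ofReal ((hV X Y).trans (hG X Y))) ?_
    calc ∫⁻ X, ENNReal.ofReal ‖symplSTFT d Φ a X Y‖ ≤ ∫⁻ X, ENNReal.ofReal (G X Y) :=
          lintegral_mono fun X => ENNReal.ofReal_le_ofReal (hV X Y)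
      _ = ENNReal.ofReal (∫ X, G X Y) :=
          (ofReal_integral_eq_lintegral_ofReal (hG_int Y) (ae_of_all _ fun X => hG₀ X Y)).symm
      _ ≤ ENNReal.ofReal (h Y) * ENNReal.ofReal A₁ := by
          rw [← ENNReal.ofReal_mul (hh₀ Y)]
          exact ENNReal.ofReal_le_ofReal (hG_integral Y)
  refine lpNormENN_le_mul_rpow hq (ENNReal.mul_ne_top ENNReal.ofReal_ne_top hA₁)
    (fun Y => (h_inner Y).trans (by gcongr; exact hh Y)) ?_
  calc _ ≤ ∫⁻ Y, ENNReal.ofReal (h Y) * ENNReal.ofReal A₁ ^ rcp p := lintegral_mono h_inner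
    _ = ENNReal.ofReal (∫ Y, h Y) * ENNReal.ofReal A₁ ^ rcp p := by
        rw [lintegral_mul_const' _ _ hA₁,
          ofReal_integral_eq_lintegral_ofReal hh_int (ae_of_all _ hh₀)]
    _ ≤ ENNReal.ofReal M * ENNReal.ofReal A₂ * ENNReal.ofReal A₁ ^ rcp p := by
        rw [← ENNReal.ofReal_mul hM]
        gcongr
    _ = _ := mul_right_comm _ _ _

lemma le_modNorm_of_le_on (hp : p ≠ 0) (hq : q ≠ 0) {m : ℝ} {v : ℝ≥0∞} (hv : v ≠ 0)
    {s : Set (PhS d)} (hs : MeasurableSet s) (hs₀ : volume s ≠ 0)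
    (h : ∀ Y ∈ s, ∃ t, MeasurableSet t ∧ volume t = v ∧ ∀ X ∈ t, m ≤ ‖symplSTFT d Φ a X Y‖) :
    ENNReal.ofReal m * v ^ rcp p * volume s ^ rcp q ≤ modNorm d p q (fun _ => 1) Φ a := by
  refine mul_rpow_measure_le_lpNormENN hq hs hs₀ fun Y hY => ?_
  obtain ⟨t, ht, rfl, hm⟩ := h Y hY
  refine mul_rpow_measure_le_lpNormENN hp ht hv fun X hX => ENNReal.ofReal_le_ofReal ?_
  rw [mul_one]
  exact hm X hX

end ModulationNorm

section WeylProductSums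

variable {d : ℕ} {ι κ : Type*}

lemma integrable_weylProd_integrand (a b : SchwartzMap (PhS d) ℂ) (X : PhS d) :
    Integrable fun Y => a (X - Y) * symplFTSchwartz d b Y *
      Complex.exp (2 * Complex.I * symplForm X Y) := by
  have h_cont : Continuous fun Y => Complex.exp (2 * Complex.I * symplForm X Y) := by
    unfold symplForm
    fun_prop
  refine Integrable.mul_bdd (c := 1) ?_ h_cont.aestronglyMeasurable
    (ae_of_all _ fun Y => (norm_cexp_two_mul_I_mul _).le)
  exact (symplFTSchwartz d b).integrable.bdd_mul
    (a.continuous.comp (continuous_sub_left X)).aestronglyMeasurable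
    (ae_of_all _ fun Y => a.toBoundedContinuousFunction.norm_coe_le_norm (X - Y))

lemma weylProd_sum_sum (s : Finset ι) (t : Finset κ) (a : ι → SchwartzMap (PhS d) ℂ)
    (b : κ → SchwartzMap (PhS d) ℂ) :
    weylProd d (∑ i ∈ s, a i : SchwartzMap (PhS d) ℂ) (∑ j ∈ t, b j : SchwartzMap (PhS d) ℂ) =
      ∑ i ∈ s, ∑ j ∈ t, weylProd d (a i) (b j) := by
  funext X
  simp only [Finset.sum_apply, weylProd_apply, ← coe_symplFTSchwartz, map_sum, sum_apply,
    Finset.sum_mul, Finset.mul_sum]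
  rw [integral_finsetSum _ fun j _ => integrable_finsetSum _ fun i _ =>
    integrable_weylProd_integrand (a i) (b j) X, Finset.sum_comm]
  simp_rw [integral_finsetSum _ fun i _ => integrable_weylProd_integrand (a i) (b _) X,
    Finset.mul_sum]

lemma weylProd_sum_coherentUnit [Fintype ι] [Fintype κ] (α β : ι → PhS d) (γ δ : κ → PhS d) :
    weylProd d (∑ i, coherentUnit (α i) (β i) : SchwartzMap (PhS d) ℂ)
        (∑ j, coherentUnit (γ j) (δ j) : SchwartzMap (PhS d) ℂ) =
      ((2 : ℂ) ^ d)⁻¹ •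
        ⇑(∑ i, ∑ j, coherentOverlap (β i) (γ j) • coherentUnit (α i) (δ j)) := by
  simp only [weylProd_sum_sum, weylProd_coherentUnit, ← Finset.smul_sum]
  congr 1
  funext X
  simp only [Finset.sum_apply, sum_apply, Pi.smul_apply, smul_apply]

end WeylProductSums

section CoherentUnitSums

variable {d : ℕ} {p q : ℝ≥0∞} {ι : Type*} [Fintype ι] {Φ : SchwartzMap (PhS d) ℂ} {D : ℝ}

lemma modNorm_sum_coherentUnit_self_le (hp : 1 ≤ p) (hq : 1 ≤ q) (hD : 0 ≤ D)
    (hV : HasCoherentDecay Φ D) {α : ι → PhS d}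
    (hα : Pairwise fun i j => 2 * Fintype.card ι ≤ dist (α i) (α j)) :
    modNorm d p q (fun _ => 1) Φ (∑ i, coherentUnit (α i) (α i) : SchwartzMap (PhS d) ℂ) ≤
      ENNReal.ofReal (2 * D) *
        ENNReal.ofReal (Fintype.card ι * ∫ X : PhS d, decayWeight X) ^ rcp p *
        ENNReal.ofReal (∫ X : PhS d, decayWeight X) ^ rcp q := by
  refine modNorm_le_of_majorant hp hq
    (G := fun X Y => ∑ i, D * decayWeight Y * decayWeight (X - α i))
    (h := fun Y => 2 * D * decayWeight Y) (fun X Y => ?_)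
    (fun Y => integrable_sum_mul_decayWeight_sub _ _ _) (fun X Y => ?_) (fun Y => ?_)
    ((integrable_decayWeight _).const_mul _) (fun Y => ?_) (integral_const_mul _ _).le
  · rw [symplSTFT_sum]
    refine (norm_sum_le _ _).trans (Finset.sum_le_sum fun i _ => (hV _ _ X Y).trans_eq ?_)
    rw [← two_smul ℝ (α i), inv_smul_smul₀ two_ne_zero, sub_self, smul_zero, sub_zero]
    ring
  · rw [← Finset.mul_sum]
    have h_sum := sum_decayWeight_sub_le_two le_rfl hα X
    have h_nonneg := mul_nonneg hD (decayWeight_nonneg Y)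
    linarith [mul_le_mul_of_nonneg_left h_sum h_nonneg]
  · have h_nonneg : 0 ≤ D * decayWeight Y * (Fintype.card ι * ∫ X : PhS d, decayWeight X) :=
      mul_nonneg (mul_nonneg hD (decayWeight_nonneg Y))
        (mul_nonneg (Nat.cast_nonneg _) (integral_nonneg decayWeight_nonneg))
    rw [integral_sum_mul_decayWeight_sub, Finset.sum_const, nsmul_eq_mul, Finset.card_univ]
    linarith
  · exact mul_le_of_le_one_right (by positivity) (decayWeight_le_one Y)

lemma modNorm_sum_coherentUnit_le (hp : 1 ≤ p) (hq : 1 ≤ q) (hD : 0 ≤ D)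
    (hV : HasCoherentDecay Φ D) {α β : ι → PhS d}
    (hαβ : Pairwise fun i j => 4 * Fintype.card ι ≤ dist (β i - α i) (β j - α j)) :
    modNorm d p q (fun _ => 1) Φ (∑ i, coherentUnit (α i) (β i) : SchwartzMap (PhS d) ℂ) ≤
      ENNReal.ofReal (2 * D) * ENNReal.ofReal (∫ X : PhS d, decayWeight X) ^ rcp p *
        ENNReal.ofReal (Fintype.card ι * ∫ X : PhS d, decayWeight X) ^ rcp q := by
  set U : ι → PhS d := fun i => (2⁻¹ : ℝ) • (α i + β i)
  set W : ι → PhS d := fun i => (2⁻¹ : ℝ) • (β i - α i)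
  have hW : Pairwise fun i j => 2⁻¹ * (4 * Fintype.card ι : ℝ) ≤ dist (W i) (W j) :=
    pairwise_le_dist_smul (by norm_num) hαβ
  refine modNorm_le_of_majorant hp hq
    (G := fun X Y => ∑ i, D * decayWeight (Y - W i) * decayWeight (X - U i))
    (h := fun Y => ∑ i, D * decayWeight (Y - W i)) (fun X Y => ?_)
    (fun Y => integrable_sum_mul_decayWeight_sub _ _ _) (fun X Y => ?_)
    (fun Y => (integral_sum_mul_decayWeight_sub _ _ _).le)
    (integrable_sum_mul_decayWeight_sub _ _ _) (fun Y => ?_) ?_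
  · rw [symplSTFT_sum]
    exact (norm_sum_le _ _).trans (Finset.sum_le_sum fun i _ => (hV _ _ X Y).trans_eq (by ring))
  · exact Finset.sum_le_sum fun i _ => mul_le_of_le_one_right
      (mul_nonneg hD (decayWeight_nonneg _)) (decayWeight_le_one _)
  · rw [← Finset.mul_sum]
    have h_sum := sum_decayWeight_sub_le_two (by linarith) hW Y
    linarith [mul_le_mul_of_nonneg_left h_sum hD]
  · have h_nonneg : 0 ≤ D * (Fintype.card ι * ∫ X : PhS d, decayWeight X) :=
      mul_nonneg hD (mul_nonneg (Nat.cast_nonneg _) (integral_nonneg decayWeight_nonneg))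
    rw [integral_sum_mul_decayWeight_sub, Finset.sum_const, nsmul_eq_mul, Finset.card_univ]
    linarith

lemma half_le_norm_symplSTFT_sum_coherentUnit (hD : 0 < D) (hV : HasCoherentDecay Φ D)
    {α β : ι → PhS d} {δ K : ℝ} (hδ : 0 < δ) {X Y : PhS d} (i₀ : ι)
    (h_peak : δ ≤ ‖symplSTFT d Φ (coherentUnit (α i₀) (β i₀)) X Y‖)
    (hY : ‖Y - (2⁻¹ : ℝ) • (β i₀ - α i₀)‖ ≤ K)
    (hαβ : Pairwise fun i j => K + 2 * Fintype.card ι * D / δ ≤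
      dist ((2⁻¹ : ℝ) • (β i - α i)) ((2⁻¹ : ℝ) • (β j - α j))) :
    δ / 2 ≤ ‖symplSTFT d Φ (∑ i, coherentUnit (α i) (β i) : SchwartzMap (PhS d) ℂ) X Y‖ := by
  have h_card : (0 : ℝ) < Fintype.card ι := Nat.cast_pos.2 (Fintype.card_pos_iff.2 ⟨i₀⟩)
  rw [symplSTFT_sum]
  refine half_le_norm_sum hδ.le i₀ h_peak fun i hi => ?_
  calc _ ≤ D * (decayWeight (X - (2⁻¹ : ℝ) • (α i + β i)) *
        decayWeight (Y - (2⁻¹ : ℝ) • (β i - α i))) := hV _ _ X Y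
    _ ≤ D * (1 * (2 * Fintype.card ι * D / δ)⁻¹) := by
        gcongr
        · exact decayWeight_nonneg _
        · exact decayWeight_le_one _
        · exact decayWeight_sub_le_inv (by positivity) hY (hαβ hi.symm)
    _ = δ / (2 * Fintype.card ι) := by field_simp

lemma norm_symplSTFT_overlap_smul_coherentUnit_le (hD : 0 ≤ D) (hV : HasCoherentDecay Φ D)
    (α β X Y : PhS d) :
    ‖symplSTFT d Φ (coherentOverlap α β • coherentUnit α β : SchwartzMap (PhS d) ℂ) X Y‖ ≤
      D * (‖coherentOverlap α β‖ * decayWeight (X - (2⁻¹ : ℝ) • (α + β))) :=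
  calc _ = ‖coherentOverlap α β‖ * ‖symplSTFT d Φ (coherentUnit α β) X Y‖ :=
        norm_symplSTFT_smul Φ _ _ X Y
    _ ≤ ‖coherentOverlap α β‖ * (D * (decayWeight (X - (2⁻¹ : ℝ) • (α + β)) * 1)) := by
        gcongr
        refine (hV _ _ X Y).trans ?_
        gcongr
        · exact decayWeight_nonneg _
        · exact decayWeight_le_one _
    _ = _ := by ring

lemma half_le_norm_symplSTFT_sum_sum_coherentUnit (hD : 0 < D) (hV : HasCoherentDecay Φ D)
    {α : ι → PhS d} {δ K : ℝ} (hδ : 0 < δ) {X Y : PhS d} (i₀ : ι)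
    (h_peak : δ ≤ ‖symplSTFT d Φ (coherentUnit (α i₀) (α i₀)) X Y‖)
    (hX : ‖X - α i₀‖ ≤ K)
    (hα : Pairwise fun i j => K + 2 * Fintype.card (ι × ι) * D / δ ≤ dist (α i) (α j)) :
    δ / 2 ≤ ‖symplSTFT d Φ (∑ i, ∑ j, coherentOverlap (α i) (α j) • coherentUnit (α i) (α j) :
      SchwartzMap (PhS d) ℂ) X Y‖ := by
  set T := 2 * Fintype.card (ι × ι) * D / δ with hT
  have h_card : (0 : ℝ) < Fintype.card (ι × ι) :=
    Nat.cast_pos.2 (Fintype.card_pos_iff.2 ⟨(i₀, i₀)⟩)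
  have hT₀ : 0 < T := by positivity
  have hK : 0 ≤ K := (norm_nonneg _).trans hX
  rw [← Fintype.sum_prod_type', symplSTFT_sum]
  refine half_le_norm_sum hδ.le (i₀, i₀) ?_ fun ⟨i, j⟩ hij => ?_
  · rwa [coherentOverlap_self, one_smul]
  calc _ ≤ D * (‖coherentOverlap (α i) (α j)‖ * decayWeight (X - (2⁻¹ : ℝ) • (α i + α j))) :=
        norm_symplSTFT_overlap_smul_coherentUnit_le hD.le hV _ _ X Y
    _ ≤ D * T⁻¹ := by
        gcongr
        obtain rfl | h_ne := eq_or_ne i j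
        · rw [coherentOverlap_self, norm_one, one_mul, ← two_smul ℝ (α i),
            inv_smul_smul₀ two_ne_zero]
          exact decayWeight_sub_le_inv hT₀ hX (hα fun h => hij (by rw [h]))
        · exact (mul_le_of_le_one_right (norm_nonneg _) (decayWeight_le_one _)).trans
            (norm_coherentOverlap_le_inv hT₀ (by linarith [hα h_ne]))
    _ = δ / (2 * Fintype.card (ι × ι)) := by rw [hT]; field_simp

end CoherentUnitSums

section CoherentUnitSumsGrowth

variable {d : ℕ} {p q : ℝ≥0∞}

lemma exists_modNorm_sum_coherentUnit_self_le (hp : 1 ≤ p) (hq : 1 ≤ q)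
    (Φ : SchwartzMap (PhS d) ℂ) :
    ∃ M ≠ ∞, ∀ (ι : Type) [Fintype ι] (α : ι → PhS d),
      (Pairwise fun i j => 2 * Fintype.card ι ≤ dist (α i) (α j)) →
      modNorm d p q (fun _ => 1) Φ (∑ i, coherentUnit (α i) (α i) : SchwartzMap (PhS d) ℂ) ≤
        M * (Fintype.card ι : ℝ≥0∞) ^ rcp p := by
  obtain ⟨D, hD, hV⟩ := exists_hasCoherentDecay Φ
  have hp₀ := rcp_nonneg p
  have hq₀ := rcp_nonneg q
  refine ⟨ENNReal.ofReal (2 * D) * ENNReal.ofReal (∫ X : PhS d, decayWeight X) ^ rcp p *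
    ENNReal.ofReal (∫ X : PhS d, decayWeight X) ^ rcp q, by finiteness, fun ι _ α hα => ?_⟩
  refine (modNorm_sum_coherentUnit_self_le hp hq hD.le hV hα).trans_eq ?_
  rw [ofReal_natCast_mul_rpow_rcp]
  ring

lemma exists_modNorm_sum_coherentUnit_le (hp : 1 ≤ p) (hq : 1 ≤ q) (Φ : SchwartzMap (PhS d) ℂ) :
    ∃ M ≠ ∞, ∀ (ι : Type) [Fintype ι] (α β : ι → PhS d),
      (Pairwise fun i j => 4 * Fintype.card ι ≤ dist (β i - α i) (β j - α j)) →
      modNorm d p q (fun _ => 1) Φ (∑ i, coherentUnit (α i) (β i) : SchwartzMap (PhS d) ℂ) ≤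
        M * (Fintype.card ι : ℝ≥0∞) ^ rcp q := by
  obtain ⟨D, hD, hV⟩ := exists_hasCoherentDecay Φ
  have hp₀ := rcp_nonneg p
  have hq₀ := rcp_nonneg q
  refine ⟨ENNReal.ofReal (2 * D) * ENNReal.ofReal (∫ X : PhS d, decayWeight X) ^ rcp p *
    ENNReal.ofReal (∫ X : PhS d, decayWeight X) ^ rcp q, by finiteness, fun ι _ α β hαβ => ?_⟩
  refine (modNorm_sum_coherentUnit_le hp hq hD.le hV hαβ).trans_eq ?_
  rw [ofReal_natCast_mul_rpow_rcp]
  ring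

lemma exists_le_modNorm_sum_sum_coherentUnit (hp : p ≠ 0) (hq : q ≠ 0)
    {Φ : SchwartzMap (PhS d) ℂ} (hΦ : Φ ≠ 0) :
    ∃ m ≠ 0, ∃ r : ℕ → ℝ, ∀ (ι : Type) [Fintype ι] [Nonempty ι] (α : ι → PhS d),
      (Pairwise fun i j => r (Fintype.card ι) ≤ dist (α i) (α j)) →
      m * (Fintype.card ι : ℝ≥0∞) ^ rcp p ≤ modNorm d p q (fun _ => 1) Φ
        (∑ i, ∑ j, coherentOverlap (α i) (α j) • coherentUnit (α i) (α j) :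
          SchwartzMap (PhS d) ℂ) := by
  obtain ⟨D, hD, hV⟩ := exists_hasCoherentDecay Φ
  obtain ⟨δ, hδ, ρ, hρ, X₀, Y₀, h_peak⟩ := exists_ball_le_norm_symplSTFT_coherentUnit Φ hΦ
  set v := volume (Metric.ball (0 : PhS d) ρ)
  have hv₀ : v ≠ 0 := (Metric.measure_ball_pos volume _ hρ).ne'
  have hv_top : v ≠ ∞ := measure_ball_lt_top.ne
  set K := ‖X₀‖ + ρ
  have hρK : ρ ≤ K := le_add_of_nonneg_left (norm_nonneg X₀)
  refine ⟨ENNReal.ofReal (δ / 2) * v ^ rcp p * v ^ rcp q, by simp [hδ, hv₀, hv_top],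
    fun n => 2 * K + 2 * (n * n) * D / δ, fun ι _ _ α hα => ?_⟩
  have h_nonneg : 0 ≤ 2 * (Fintype.card ι * Fintype.card ι) * D / δ := by positivity
  have hα_shift : Pairwise fun i j => ρ + ρ ≤ dist (X₀ + α i) (X₀ + α j) := fun i j hij =>
    le_of_le_of_eq (by linarith [hα hij]) (dist_add_left _ _ _).symm
  have hα_sep : Pairwise fun i j => K + 2 * Fintype.card (ι × ι) * D / δ ≤ dist (α i) (α j) :=
    fun i j hij => by
      simp only [Fintype.card_prod, Nat.cast_mul]
      linarith [hα hij]
  have h_volume : volume (⋃ i, Metric.ball (X₀ + α i) ρ) = Fintype.card ι * v :=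
    measure_iUnion_ball volume le_rfl hα_shift
  have hv_Y₀ : volume (Metric.ball Y₀ ρ) = v := Measure.addHaar_ball_center _ _ _
  calc _ = ENNReal.ofReal (δ / 2) * (Fintype.card ι * v) ^ rcp p *
        volume (Metric.ball Y₀ ρ) ^ rcp q := by
        rw [hv_Y₀, ENNReal.mul_rpow_of_nonneg _ _ (rcp_nonneg p)]
        ring
    _ ≤ _ := le_modNorm_of_le_on hp hq (by simp [hv₀]) measurableSet_ball (hv_Y₀.trans_ne hv₀)
        fun Y hY => ⟨_, .iUnion fun _ => measurableSet_ball, h_volume, fun X hX => ?_⟩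
  obtain ⟨i₀, hX⟩ := Set.mem_iUnion.1 hX
  refine half_le_norm_symplSTFT_sum_sum_coherentUnit hD hV hδ i₀ (h_peak _ _ X Y ?_ ?_)
    (norm_sub_le_of_mem_ball_add hX) hα_sep
  · rwa [← two_smul ℝ (α i₀), inv_smul_smul₀ two_ne_zero]
  · rwa [sub_self, smul_zero, add_zero]

lemma exists_le_modNorm_sum_coherentUnit (hp : p ≠ 0) (hq : q ≠ 0)
    {Φ : SchwartzMap (PhS d) ℂ} (hΦ : Φ ≠ 0) :
    ∃ m ≠ 0, ∃ r : ℕ → ℝ, ∀ (ι : Type) [Fintype ι] [Nonempty ι] (α β : ι → PhS d),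
      (Pairwise fun i j => r (Fintype.card ι) ≤ dist (β i - α i) (β j - α j)) →
      m * (Fintype.card ι : ℝ≥0∞) ^ rcp q ≤ modNorm d p q (fun _ => 1) Φ
        (∑ i, coherentUnit (α i) (β i) : SchwartzMap (PhS d) ℂ) := by
  obtain ⟨D, hD, hV⟩ := exists_hasCoherentDecay Φ
  obtain ⟨δ, hδ, ρ, hρ, X₀, Y₀, h_peak⟩ := exists_ball_le_norm_symplSTFT_coherentUnit Φ hΦ
  set v := volume (Metric.ball (0 : PhS d) ρ)
  have hv₀ : v ≠ 0 := (Metric.measure_ball_pos volume _ hρ).ne'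
  have hv_top : v ≠ ∞ := measure_ball_lt_top.ne
  set K := ‖Y₀‖ + ρ
  have hρK : ρ ≤ K := le_add_of_nonneg_left (norm_nonneg Y₀)
  refine ⟨ENNReal.ofReal (δ / 2) * v ^ rcp p * v ^ rcp q, by simp [hδ, hv₀, hv_top],
    fun n => 2 * (2 * K + 2 * n * D / δ), fun ι _ _ α β hαβ => ?_⟩
  have h_nonneg : 0 ≤ 2 * Fintype.card ι * D / δ := by positivity
  have hW : Pairwise fun i j => 2 * K + 2 * Fintype.card ι * D / δ ≤
      dist ((2⁻¹ : ℝ) • (β i - α i)) ((2⁻¹ : ℝ) • (β j - α j)) := by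
    simpa only [inv_mul_cancel_left₀ (two_ne_zero' ℝ)] using
      pairwise_le_dist_smul (inv_nonneg.2 zero_le_two) hαβ
  have h_volume : volume (⋃ i, Metric.ball (Y₀ + (2⁻¹ : ℝ) • (β i - α i)) ρ) =
      Fintype.card ι * v :=
    measure_iUnion_ball volume (R := ρ + ρ) le_rfl fun i j hij =>
      le_of_le_of_eq (by linarith [hW hij]) (dist_add_left _ _ _).symm
  calc _ = ENNReal.ofReal (δ / 2) * v ^ rcp p *
        volume (⋃ i, Metric.ball (Y₀ + (2⁻¹ : ℝ) • (β i - α i)) ρ) ^ rcp q := by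
        rw [h_volume, ENNReal.mul_rpow_of_nonneg _ _ (rcp_nonneg q)]
        ring
    _ ≤ _ := le_modNorm_of_le_on hp hq hv₀ (.iUnion fun _ => measurableSet_ball)
        (h_volume.trans_ne (by simp [hv₀])) fun Y hY => ?_
  obtain ⟨i₀, hY⟩ := Set.mem_iUnion.1 hY
  exact ⟨Metric.ball (X₀ + (2⁻¹ : ℝ) • (α i₀ + β i₀)) ρ, measurableSet_ball,
    Measure.addHaar_ball_center _ _ _, fun X hX =>
      half_le_norm_symplSTFT_sum_coherentUnit hD hV hδ i₀ (h_peak _ _ X Y hX hY)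
        (norm_sub_le_of_mem_ball_add hY) fun i j hij => by linarith [hW hij]⟩

lemma modNorm_coherentUnit_ne_top (hp : 1 ≤ p) (hq : 1 ≤ q) (Φ : SchwartzMap (PhS d) ℂ)
    (α β : PhS d) : modNorm d p q (fun _ => 1) Φ (coherentUnit α β) ≠ ∞ := by
  obtain ⟨M, hM, h_upper⟩ := exists_modNorm_sum_coherentUnit_le hp hq Φ
  have h_unit := h_upper Unit (fun _ => α) (fun _ => β) Subsingleton.pairwise
  rw [Fintype.card_unit, Nat.cast_one, ENNReal.one_rpow, mul_one, Fintype.sum_unique] at h_unit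
  exact ne_top_of_le_ne_top hM h_unit

lemma modNorm_coherentUnit_ne_zero (hp : p ≠ 0) (hq : q ≠ 0) {Φ : SchwartzMap (PhS d) ℂ}
    (hΦ : Φ ≠ 0) (α β : PhS d) : modNorm d p q (fun _ => 1) Φ (coherentUnit α β) ≠ 0 := by
  obtain ⟨m, hm, r, h_lower⟩ := exists_le_modNorm_sum_coherentUnit hp hq hΦ
  have h_unit := h_lower Unit (fun _ => α) (fun _ => β) Subsingleton.pairwise
  rw [Fintype.card_unit, Nat.cast_one, ENNReal.one_rpow, mul_one, Fintype.sum_unique] at h_unit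
  exact ((pos_iff_ne_zero.2 hm).trans_le h_unit).ne'

end CoherentUnitSumsGrowth

section CollinearPoints

variable {d : ℕ}

lemma exists_separated_isotropic (hd : 0 < d) (n : ℕ) (R : ℝ) :
    ∃ z : Fin n → PhS d, (Pairwise fun i j => R ≤ dist (z i) (z j)) ∧
      ∀ i j, symplForm (z i) (z j) = 0 := by
  let e : PhS d := (EuclideanSpace.single ⟨0, hd⟩ 1, 0)
  have he : ‖e‖ = 1 := by simp [e, Prod.norm_def]
  refine ⟨fun k => ((k : ℝ) * |R|) • e, fun i j hij => ?_, fun i j => ?_⟩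
  · have h_index : (1 : ℝ) ≤ |(i : ℝ) - j| := by
      have h_sub : (i : ℤ) - j ≠ 0 := sub_ne_zero.2 (by exact_mod_cast Fin.val_ne_of_ne hij)
      exact_mod_cast Int.one_le_abs h_sub
    calc R ≤ 1 * |R| := by rw [one_mul]; exact le_abs_self R
      _ ≤ |(i : ℝ) - j| * |R| := by gcongr
      _ = _ := by
        rw [dist_eq_norm, ← sub_smul, ← sub_mul, norm_smul, he, mul_one, norm_mul, norm_abs_eq_norm,
          Real.norm_eq_abs, Real.norm_eq_abs]
  · rw [symplForm_smul_left, symplForm_smul_right, symplForm_self, mul_zero, mul_zero]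

lemma coherentOverlap_eq_ofReal {β γ : PhS d} (h : symplForm β γ = 0) :
    coherentOverlap β γ = Real.exp (-(euclideanSq (β - γ) / 4)) := by
  simp [coherentOverlap, gaussPhase, h]

lemma card_le_norm_sum_sum_coherentOverlap {ι : Type*} [Fintype ι] {z : ι → PhS d}
    (hz : ∀ i j, symplForm (z i) (z j) = 0) :
    Fintype.card ι ≤ ‖∑ i, ∑ j, coherentOverlap (z i) (z j)‖ := by
  let K (i j : ι) : ℝ := Real.exp (-(euclideanSq (z i - z j) / 4))
  have hK₀ (i j : ι) : 0 ≤ K i j := Real.exp_nonneg _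
  have hK_diag (i : ι) : K i i = 1 := by simp [K, euclideanSq]
  calc (Fintype.card ι : ℝ) = ∑ i, K i i := by simp [hK_diag]
    _ ≤ ∑ i, ∑ j, K i j := Finset.sum_le_sum fun i _ =>
        Finset.single_le_sum (fun j _ => hK₀ i j) (Finset.mem_univ i)
    _ ≤ ‖((∑ i, ∑ j, K i j : ℝ) : ℂ)‖ := by
        rw [Complex.norm_real]
        exact le_abs_self _
    _ = ‖∑ i, ∑ j, coherentOverlap (z i) (z j)‖ := by
        simp only [K, coherentOverlap_eq_ofReal (hz _ _), Complex.ofReal_sum]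

end CollinearPoints

section WeylBound

variable {d : ℕ} {p₀ q₀ p₁ q₁ p₂ q₂ C : ℝ≥0∞} {Φ : SchwartzMap (PhS d) ℂ}

/-- The bound `‖a # b‖_{ℳ^{p₀,q₀}} ≤ C ‖a‖_{ℳ^{p₁,q₁}} ‖b‖_{ℳ^{p₂,q₂}}` for all Schwartz symbols.
Here `p₀`, `q₀` are the exponents of the target space, not their conjugates. -/
def IsWeylBounded (p₀ q₀ p₁ q₁ p₂ q₂ C : ℝ≥0∞) (Φ : SchwartzMap (PhS d) ℂ) : Prop :=
  ∀ a b : SchwartzMap (PhS d) ℂ,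
    modNorm d p₀ q₀ (fun _ => 1) Φ (weylProd d a b) ≤
      C * modNorm d p₁ q₁ (fun _ => 1) Φ a * modNorm d p₂ q₂ (fun _ => 1) Φ b

namespace IsWeylBounded

lemma modNorm_sum_sum_le (h : IsWeylBounded p₀ q₀ p₁ q₁ p₂ q₂ C Φ) (hp₀ : p₀ ≠ 0) (hq₀ : q₀ ≠ 0)
    {ι κ : Type*} [Fintype ι] [Fintype κ] (α β : ι → PhS d) (γ δ : κ → PhS d) :
    modNorm d p₀ q₀ (fun _ => 1) Φ
        (∑ i, ∑ j, coherentOverlap (β i) (γ j) • coherentUnit (α i) (δ j) :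
          SchwartzMap (PhS d) ℂ) ≤
      2 ^ d * C *
        modNorm d p₁ q₁ (fun _ => 1) Φ (∑ i, coherentUnit (α i) (β i) : SchwartzMap (PhS d) ℂ) *
        modNorm d p₂ q₂ (fun _ => 1) Φ (∑ j, coherentUnit (γ j) (δ j) : SchwartzMap (PhS d) ℂ) := by
  have h_norm : ENNReal.ofReal ‖((2 : ℂ) ^ d)⁻¹‖ = (2 ^ d)⁻¹ := by
    rw [norm_inv, norm_pow, Complex.norm_two, ENNReal.ofReal_inv_of_pos (by positivity),
      ENNReal.ofReal_pow zero_le_two, ENNReal.ofReal_ofNat]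
  have h_sums := h (∑ i, coherentUnit (α i) (β i)) (∑ j, coherentUnit (γ j) (δ j))
  rw [weylProd_sum_coherentUnit, modNorm_smul hp₀ hq₀, h_norm,
    ENNReal.inv_mul_le_iff (by simp) (by simp)] at h_sums
  simpa only [mul_assoc] using h_sums

lemma rcp_p_le_rcp_p_add_rcp_p (h : IsWeylBounded p₀ q₀ p₁ q₁ p₂ q₂ C Φ) (hd : 0 < d) (hΦ : Φ ≠ 0)
    (hC : C ≠ ∞) (hp₀ : p₀ ≠ 0) (hq₀ : q₀ ≠ 0) (hp₁ : 1 ≤ p₁) (hq₁ : 1 ≤ q₁) (hp₂ : 1 ≤ p₂)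
    (hq₂ : 1 ≤ q₂) : rcp p₀ ≤ rcp p₁ + rcp p₂ := by
  obtain ⟨m, hm, r, h_lower⟩ := exists_le_modNorm_sum_sum_coherentUnit hp₀ hq₀ hΦ
  obtain ⟨M₁, hM₁, h_upper₁⟩ := exists_modNorm_sum_coherentUnit_self_le hp₁ hq₁ Φ
  obtain ⟨M₂, hM₂, h_upper₂⟩ := exists_modNorm_sum_coherentUnit_self_le hp₂ hq₂ Φ
  refine le_of_forall_natCast_rpow_le (c₁ := 2 ^ d * C * M₁ * M₂) hm (by finiteness) fun n hn => ?_
  obtain ⟨z, hz, -⟩ := exists_separated_isotropic hd n (max (r n) (2 * n))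
  have hz_r := hz.mono fun i j hij => (le_max_left _ _).trans hij
  have hz_two := hz.mono fun i j hij => (le_max_right _ _).trans hij
  have : NeZero n := ⟨hn.ne'⟩
  have h_lower := h_lower (Fin n) z
  have h_upper₁ := h_upper₁ (Fin n) z
  have h_upper₂ := h_upper₂ (Fin n) z
  simp only [Fintype.card_fin] at h_lower h_upper₁ h_upper₂
  calc m * (n : ℝ≥0∞) ^ rcp p₀ ≤ _ := h_lower hz_r
    _ ≤ _ := h.modNorm_sum_sum_le hp₀ hq₀ z z z z
    _ ≤ 2 ^ d * C * (M₁ * (n : ℝ≥0∞) ^ rcp p₁) * (M₂ * (n : ℝ≥0∞) ^ rcp p₂) := by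
        gcongr
        exacts [h_upper₁ hz_two, h_upper₂ hz_two]
    _ = 2 ^ d * C * M₁ * M₂ * (n : ℝ≥0∞) ^ (rcp p₁ + rcp p₂) := by
        rw [ENNReal.rpow_add_of_nonneg _ _ (rcp_nonneg p₁) (rcp_nonneg p₂)]
        ring

lemma rcp_q_le_rcp_q_left (h : IsWeylBounded p₀ q₀ p₁ q₁ p₂ q₂ C Φ) (hd : 0 < d) (hΦ : Φ ≠ 0)
    (hC : C ≠ ∞) (hp₀ : p₀ ≠ 0) (hq₀ : q₀ ≠ 0) (hp₁ : 1 ≤ p₁) (hq₁ : 1 ≤ q₁) (hp₂ : 1 ≤ p₂)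
    (hq₂ : 1 ≤ q₂) : rcp q₀ ≤ rcp q₁ := by
  obtain ⟨m, hm, r, h_lower⟩ := exists_le_modNorm_sum_coherentUnit hp₀ hq₀ hΦ
  obtain ⟨M, hM, h_upper⟩ := exists_modNorm_sum_coherentUnit_le hp₁ hq₁ Φ
  set B := modNorm d p₂ q₂ (fun _ => 1) Φ (coherentUnit 0 0)
  have hB : B ≠ ∞ := modNorm_coherentUnit_ne_top hp₂ hq₂ Φ 0 0
  refine le_of_forall_natCast_rpow_le (c₁ := 2 ^ d * C * M * B) hm (by finiteness) fun n hn => ?_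
  obtain ⟨z, hz, -⟩ := exists_separated_isotropic hd n (max (r n) (4 * n))
  have hz_r := hz.mono fun i j hij => (le_max_left _ _).trans hij
  have hz_four := hz.mono fun i j hij => (le_max_right _ _).trans hij
  have : NeZero n := ⟨hn.ne'⟩
  have h_lower := h_lower (Fin n) z 0
  have h_upper := h_upper (Fin n) z 0
  have h_bound := h.modNorm_sum_sum_le hp₀ hq₀ z 0 (0 : Unit → PhS d) 0
  simp only [Fintype.card_fin, Pi.zero_apply, dist_sub_left, Fintype.sum_unique,
    coherentOverlap_self, one_smul] at h_lower h_upper h_bound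
  calc m * (n : ℝ≥0∞) ^ rcp q₀ ≤ _ := h_lower hz_r
    _ ≤ _ := h_bound
    _ ≤ 2 ^ d * C * (M * (n : ℝ≥0∞) ^ rcp q₁) * B := by
        gcongr
        exact h_upper hz_four
    _ = 2 ^ d * C * M * B * (n : ℝ≥0∞) ^ rcp q₁ := by ring

lemma rcp_q_le_rcp_q_right (h : IsWeylBounded p₀ q₀ p₁ q₁ p₂ q₂ C Φ) (hd : 0 < d) (hΦ : Φ ≠ 0)
    (hC : C ≠ ∞) (hp₀ : p₀ ≠ 0) (hq₀ : q₀ ≠ 0) (hp₁ : 1 ≤ p₁) (hq₁ : 1 ≤ q₁) (hp₂ : 1 ≤ p₂)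
    (hq₂ : 1 ≤ q₂) : rcp q₀ ≤ rcp q₂ := by
  obtain ⟨m, hm, r, h_lower⟩ := exists_le_modNorm_sum_coherentUnit hp₀ hq₀ hΦ
  obtain ⟨M, hM, h_upper⟩ := exists_modNorm_sum_coherentUnit_le hp₂ hq₂ Φ
  set B := modNorm d p₁ q₁ (fun _ => 1) Φ (coherentUnit 0 0)
  have hB : B ≠ ∞ := modNorm_coherentUnit_ne_top hp₁ hq₁ Φ 0 0
  refine le_of_forall_natCast_rpow_le (c₁ := 2 ^ d * C * B * M) hm (by finiteness) fun n hn => ?_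
  obtain ⟨z, hz, -⟩ := exists_separated_isotropic hd n (max (r n) (4 * n))
  have hz_r := hz.mono fun i j hij => (le_max_left _ _).trans hij
  have hz_four := hz.mono fun i j hij => (le_max_right _ _).trans hij
  have : NeZero n := ⟨hn.ne'⟩
  have h_lower := h_lower (Fin n) 0 z
  have h_upper := h_upper (Fin n) 0 z
  have h_bound := h.modNorm_sum_sum_le hp₀ hq₀ (0 : Unit → PhS d) 0 0 z
  simp only [Fintype.card_fin, Pi.zero_apply, sub_zero, Fintype.sum_unique,
    coherentOverlap_self, one_smul] at h_lower h_upper h_bound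
  calc m * (n : ℝ≥0∞) ^ rcp q₀ ≤ _ := h_lower hz_r
    _ ≤ _ := h_bound
    _ ≤ 2 ^ d * C * B * (M * (n : ℝ≥0∞) ^ rcp q₂) := by
        gcongr
        exact h_upper hz_four
    _ = 2 ^ d * C * B * M * (n : ℝ≥0∞) ^ rcp q₂ := by ring

lemma one_le_rcp_q_add_rcp_q (h : IsWeylBounded p₀ q₀ p₁ q₁ p₂ q₂ C Φ) (hd : 0 < d) (hΦ : Φ ≠ 0)
    (hC : C ≠ ∞) (hp₀ : p₀ ≠ 0) (hq₀ : q₀ ≠ 0) (hp₁ : 1 ≤ p₁) (hq₁ : 1 ≤ q₁) (hp₂ : 1 ≤ p₂)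
    (hq₂ : 1 ≤ q₂) : 1 ≤ rcp q₁ + rcp q₂ := by
  set B := modNorm d p₀ q₀ (fun _ => 1) Φ (coherentUnit 0 0)
  have hB : B ≠ 0 := modNorm_coherentUnit_ne_zero hp₀ hq₀ hΦ 0 0
  obtain ⟨M₁, hM₁, h_upper₁⟩ := exists_modNorm_sum_coherentUnit_le hp₁ hq₁ Φ
  obtain ⟨M₂, hM₂, h_upper₂⟩ := exists_modNorm_sum_coherentUnit_le hp₂ hq₂ Φ
  refine le_of_forall_natCast_rpow_le (c₁ := 2 ^ d * C * M₁ * M₂) hB (by finiteness) fun n _ => ?_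
  obtain ⟨z, hz, hz_isotropic⟩ := exists_separated_isotropic hd n (4 * n)
  have h_card : (n : ℝ≥0∞) ≤ ENNReal.ofReal ‖∑ i, ∑ j, coherentOverlap (z i) (z j)‖ := by
    rw [← ENNReal.ofReal_natCast]
    exact ENNReal.ofReal_le_ofReal
      (by simpa using card_le_norm_sum_sum_coherentOverlap hz_isotropic)
  have h_upper₁ := h_upper₁ (Fin n) 0 z
  have h_upper₂ := h_upper₂ (Fin n) z 0
  have h_bound := h.modNorm_sum_sum_le hp₀ hq₀ 0 z z 0
  simp only [Fintype.card_fin, Pi.zero_apply, sub_zero, dist_sub_left, ← Finset.sum_smul]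
    at h_upper₁ h_upper₂ h_bound
  calc B * (n : ℝ≥0∞) ^ (1 : ℝ) ≤ ENNReal.ofReal ‖∑ i, ∑ j, coherentOverlap (z i) (z j)‖ * B := by
        rw [ENNReal.rpow_one, mul_comm]
        gcongr
    _ = _ := (modNorm_smul hp₀ hq₀ _ Φ _ _).symm
    _ ≤ _ := h_bound
    _ ≤ 2 ^ d * C * (M₁ * (n : ℝ≥0∞) ^ rcp q₁) * (M₂ * (n : ℝ≥0∞) ^ rcp q₂) := by
        gcongr
        exacts [h_upper₁ hz, h_upper₂ hz]
    _ = 2 ^ d * C * M₁ * M₂ * (n : ℝ≥0∞) ^ (rcp q₁ + rcp q₂) := by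
        rw [ENNReal.rpow_add_of_nonneg _ _ (rcp_nonneg q₁) (rcp_nonneg q₂)]
        ring

end IsWeylBounded

end WeylBound

/-- Lemma (necessity, Gaussians and duality): if the Weyl product satisfies the
unweighted modulation space bound, then `1 ≤ 1/p₀ + 1/p₁ + 1/p₂` and
`1 ≤ 1/q_j + 1/q_k` for all `j ≠ k`. -/
theorem weyl_product_necessary_holder_conditions
    (d : ℕ) (hd : 1 ≤ d)
    (p q pc qc : Fin 3 → ℝ≥0∞)
    (hp : ∀ j, 1 ≤ p j) (hq : ∀ j, 1 ≤ q j)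
    (hpc : ∀ j, (p j)⁻¹ + (pc j)⁻¹ = 1) (hqc : ∀ j, (q j)⁻¹ + (qc j)⁻¹ = 1)
    (Φ : SchwartzMap (PhS d) ℂ) (hΦ : Φ ≠ 0)
    (C : ℝ) (hC : 0 < C)
    (hbound : ∀ a b : SchwartzMap (PhS d) ℂ,
      modNorm d (pc 0) (qc 0) (fun _ => 1) (⇑Φ) (weylProd d (⇑a) (⇑b)) ≤
        ENNReal.ofReal C * modNorm d (p 1) (q 1) (fun _ => 1) (⇑Φ) (⇑a) *
          modNorm d (p 2) (q 2) (fun _ => 1) (⇑Φ) (⇑b)) :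
    1 ≤ rcp (p 0) + rcp (p 1) + rcp (p 2) ∧
      ∀ j k : Fin 3, j ≠ k → 1 ≤ rcp (q j) + rcp (q k) := by
  have h : IsWeylBounded (pc 0) (qc 0) (p 1) (q 1) (p 2) (q 2) (ENNReal.ofReal C) Φ := hbound
  have hC_top : ENNReal.ofReal C ≠ ∞ := ENNReal.ofReal_ne_top
  have hpc₀ := ne_zero_of_inv_add_inv_eq_one (hpc 0)
  have hqc₀ := ne_zero_of_inv_add_inv_eq_one (hqc 0)
  have hp_conj := rcp_add_rcp_eq_one (hpc 0)
  have hq_conj := rcp_add_rcp_eq_one (hqc 0)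
  have h_p := h.rcp_p_le_rcp_p_add_rcp_p hd hΦ hC_top hpc₀ hqc₀ (hp 1) (hq 1) (hp 2) (hq 2)
  have h_q₁ := h.rcp_q_le_rcp_q_left hd hΦ hC_top hpc₀ hqc₀ (hp 1) (hq 1) (hp 2) (hq 2)
  have h_q₂ := h.rcp_q_le_rcp_q_right hd hΦ hC_top hpc₀ hqc₀ (hp 1) (hq 1) (hp 2) (hq 2)
  have h_q₁₂ := h.one_le_rcp_q_add_rcp_q hd hΦ hC_top hpc₀ hqc₀ (hp 1) (hq 1) (hp 2) (hq 2)
  refine ⟨by linarith, fun j k hjk => ?_⟩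
  fin_cases j <;> fin_cases k <;> grind

end
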